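/- arXiv:1509.02013 — 7 statements merged into one kernel-verified Lean document; each statement's English description precedes it below -/
import Mathlib

section
/- Let q be an odd prime power and let f ∈ F_q[T] be monic. Then f is a sum of two squares if and only if for every monic irreducible polynomial P ∈ F_q[T] such that P(−T²) is irreducible in F_q[T], the multiplicity of P in the prime factorization of f is even. -/
/-!
In the quadratic extension `R[T][√-T]` the norm of `A + B√-T` is `A² + T·B²`, so the sums of two
squares are exactly the norms from this extension. The extension is itself a polynomial ring, in
the variable `S = √-T`: it is `R[S]`, and `P(T)` sits in it as `P(-S²)`. Over a field it is thus a
principal ideal domain, where `P(-S²)` irreducible means that `P` stays prime. A prime that stays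
prime and divides `N(z) = z·z̄` divides `z`, hence occurs in a norm to an even power. A prime that
does not stay prime factors as `P = z·w` into non-units, and comparing norms in `P² = N(z)·N(w)`
shows that `P` is, up to a unit, the norm of `z`; leading coefficients of norms are squares, so for
monic `P` the unit is itself a norm.
-/

section QuadraticNorm

variable {R : Type*} [CommRing R] {a b : R}

theorem algebraMap_dvd_of_dvd_norm {p : R} {z : QuadraticAlgebra R a b}
    (hp : Prime (algebraMap R (QuadraticAlgebra R a b) p)) (hpz : p ∣ z.norm) :
    algebraMap R (QuadraticAlgebra R a b) p ∣ z := by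
  have hdvd_mul : algebraMap R (QuadraticAlgebra R a b) p ∣ z * star z :=
    QuadraticAlgebra.algebraMap_norm_eq_mul_star z ▸ map_dvd _ hpz
  refine (hp.dvd_or_dvd hdvd_mul).elim id fun hdvd_star ↦ ?_
  obtain ⟨hre, him⟩ := QuadraticAlgebra.algebraMap_dvd_iff.mp hdvd_star
  have him' : p ∣ z.im := dvd_neg.mp him
  exact QuadraticAlgebra.algebraMap_dvd_iff.mpr ⟨(dvd_add_left (him'.mul_left b)).mp hre, him'⟩

variable [IsDomain R]

theorem algebraMap_pow_succ_dvd_of_pow_dvd_norm {p : R}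
    (hp : Prime (algebraMap R (QuadraticAlgebra R a b) p)) (m : ℕ)
    {z : QuadraticAlgebra R a b} (hpz : p ^ (2 * m + 1) ∣ z.norm) :
    algebraMap R (QuadraticAlgebra R a b) p ^ (m + 1) ∣ z := by
  induction m generalizing z with
  | zero => simpa using algebraMap_dvd_of_dvd_norm hp (by simpa using hpz)
  | succ m ih =>
    obtain ⟨w, rfl⟩ := algebraMap_dvd_of_dvd_norm hp ((dvd_pow_self p (by lia)).trans hpz)
    have hp0 : p ≠ 0 := fun h ↦ hp.ne_zero (by rw [h, map_zero])
    have hpw : p ^ (2 * m + 1) ∣ w.norm := by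
      rwa [map_mul, QuadraticAlgebra.norm_algebraMap,
        show 2 * (m + 1) + 1 = 2 + (2 * m + 1) by ring, pow_add,
        mul_dvd_mul_iff_left (pow_ne_zero 2 hp0)] at hpz
    rw [pow_succ']
    exact mul_dvd_mul_left _ (ih hpw)

theorem even_of_pow_dvd_norm {p : R} (hp : Prime (algebraMap R (QuadraticAlgebra R a b) p))
    {z : QuadraticAlgebra R a b} {k : ℕ} (hdvd : p ^ k ∣ z.norm) (hndvd : ¬ p ^ (k + 1) ∣ z.norm) :
    Even k := by
  by_contra hodd
  obtain ⟨m, rfl⟩ := Nat.not_even_iff_odd.mp hodd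
  have hnorm := map_dvd QuadraticAlgebra.norm (algebraMap_pow_succ_dvd_of_pow_dvd_norm hp m hdvd)
  rw [map_pow, QuadraticAlgebra.norm_algebraMap, ← pow_mul] at hnorm
  exact hndvd hnorm

theorem exists_associated_norm_of_not_irreducible_algebraMap {p : R} (hp : Prime p)
    (hred : ¬ Irreducible (algebraMap R (QuadraticAlgebra R a b) p)) :
    ∃ z : QuadraticAlgebra R a b, Associated z.norm p := by
  have hnonunit : ¬ IsUnit (algebraMap R (QuadraticAlgebra R a b) p) := by
    rw [QuadraticAlgebra.isUnit_iff_norm_isUnit, QuadraticAlgebra.norm_algebraMap,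
      isUnit_pow_iff two_ne_zero]
    exact hp.not_isUnit
  obtain ⟨z, w, hfactor, hz, hw⟩ : ∃ z w : QuadraticAlgebra R a b,
      algebraMap R _ p = z * w ∧ ¬ IsUnit z ∧ ¬ IsUnit w := by
    simpa only [irreducible_iff, hnonunit, not_false_eq_true, true_and, not_forall, not_or,
      exists_prop] using hred
  rw [QuadraticAlgebra.isUnit_iff_norm_isUnit] at hz hw
  have hmul : z.norm * w.norm = p ^ 2 := by
    rw [← map_mul, ← hfactor, QuadraticAlgebra.norm_algebraMap]
  obtain ⟨i, hi, hassoc⟩ := (dvd_prime_pow hp 2).mp (Dvd.intro _ hmul)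
  refine ⟨z, ?_⟩
  interval_cases i
  · exact absurd (associated_one_iff_isUnit.mp (by simpa using hassoc)) hz
  · simpa using hassoc
  · rw [← hmul] at hassoc
    have hz0 : z.norm ≠ 0 := left_ne_zero_of_mul (hmul ▸ pow_ne_zero 2 hp.ne_zero)
    exact absurd (isUnit_of_associated_mul hassoc.symm hz0) hw

end QuadraticNorm

section SqrtNegX

open Polynomial

variable (R : Type*) [CommRing R]

/-- The quadratic extension `R[X][√-X]`, whose generator `√-X` is `QuadraticAlgebra.omega`. -/
abbrev SqrtNegX : Type _ := QuadraticAlgebra R[X] (-X) 0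

variable {R}

theorem omega_sq_eq_algebraMap_neg_X :
    (QuadraticAlgebra.omega : SqrtNegX R) ^ 2 = algebraMap R[X] _ (-X) := by
  rw [sq, QuadraticAlgebra.omega_mul_omega_eq_algebraMap, map_zero, zero_mul, add_zero]

theorem aeval_omega_comp_neg_X_sq (p : R[X]) :
    aeval (QuadraticAlgebra.omega : SqrtNegX R) (p.comp (-(X ^ 2))) = algebraMap R[X] _ p := by
  rw [aeval_comp, map_neg, map_pow, aeval_X, omega_sq_eq_algebraMap_neg_X, map_neg, neg_neg,
    aeval_algebraMap_apply, aeval_X_left_apply]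

theorem aeval_omega_surjective :
    Function.Surjective (aeval (R := R) (QuadraticAlgebra.omega : SqrtNegX R)) := by
  intro z
  refine ⟨z.re.comp (-(X ^ 2)) + z.im.comp (-(X ^ 2)) * X, ?_⟩
  rw [map_add, map_mul, aeval_X, aeval_omega_comp_neg_X_sq, aeval_omega_comp_neg_X_sq,
    ← Algebra.smul_def, ← QuadraticAlgebra.mk_eq_add_smul_omega]

variable [IsDomain R]

theorem transcendental_omega : Transcendental R (QuadraticAlgebra.omega : SqrtNegX R) := by
  intro halg
  have hneg : IsAlgebraic R (-X : R[X]) := by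
    rw [← isAlgebraic_algebraMap_iff (A := SqrtNegX R) QuadraticAlgebra.algebraMap_injective,
      ← omega_sq_eq_algebraMap_neg_X]
    exact halg.pow 2
  exact transcendental_X R (neg_neg (X : R[X]) ▸ hneg.neg)

/-- `R[X][√-X]` as a polynomial ring over `R`, the variable `X` of the source going to `√-X`. -/
noncomputable def equivSqrtNegX : R[X] ≃ₐ[R] SqrtNegX R :=
  .ofBijective (aeval QuadraticAlgebra.omega)
    ⟨transcendental_iff_injective.mp transcendental_omega, aeval_omega_surjective⟩

theorem equivSqrtNegX_comp_neg_X_sq (p : R[X]) :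
    equivSqrtNegX (p.comp (-(X ^ 2))) = algebraMap R[X] _ p :=
  aeval_omega_comp_neg_X_sq p

theorem irreducible_algebraMap_iff_comp_neg_X_sq {p : R[X]} :
    Irreducible (algebraMap R[X] (SqrtNegX R) p) ↔ Irreducible (p.comp (-(X ^ 2))) := by
  rw [← equivSqrtNegX_comp_neg_X_sq, MulEquiv.irreducible_iff]

theorem prime_algebraMap_iff_comp_neg_X_sq {p : R[X]} :
    Prime (algebraMap R[X] (SqrtNegX R) p) ↔ Prime (p.comp (-(X ^ 2))) := by
  rw [← equivSqrtNegX_comp_neg_X_sq, MulEquiv.prime_iff]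

end SqrtNegX

section SumsOfTwoSquares

open Polynomial

/-- The sums of two squares `A² + X·B²` in `R[X]`, as the monoid of norms from `R[X][√-X]`. -/
noncomputable def sumsOfTwoSquares (R : Type*) [CommRing R] : Submonoid R[X] :=
  MonoidHom.mrange (QuadraticAlgebra.norm : SqrtNegX R →* R[X])

theorem mem_sumsOfTwoSquares_iff {R : Type*} [CommRing R] {f : R[X]} :
    f ∈ sumsOfTwoSquares R ↔ ∃ A B : R[X], f = A ^ 2 + X * B ^ 2 := by
  have hnorm (z : SqrtNegX R) : z.norm = z.re ^ 2 + X * z.im ^ 2 := by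
    rw [QuadraticAlgebra.norm_def]
    ring
  constructor
  · rintro ⟨z, rfl⟩
    exact ⟨z.re, z.im, hnorm z⟩
  · rintro ⟨A, B, rfl⟩
    exact ⟨⟨A, B⟩, hnorm _⟩

theorem sq_mem_sumsOfTwoSquares {R : Type*} [CommRing R] (f : R[X]) :
    f ^ 2 ∈ sumsOfTwoSquares R :=
  ⟨algebraMap _ _ f, QuadraticAlgebra.norm_algebraMap f⟩

theorem C_mem_sumsOfTwoSquares {R : Type*} [CommRing R] {c : R} (hc : IsSquare c) :
    C c ∈ sumsOfTwoSquares R := by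
  obtain ⟨d, rfl⟩ := (isSquare_iff_exists_sq c).mp hc
  rw [C_pow]
  exact sq_mem_sumsOfTwoSquares (C d)

theorem isSquare_leadingCoeff_of_mem_sumsOfTwoSquares {R : Type*} [CommRing R] [IsDomain R]
    {f : R[X]} (hf : f ∈ sumsOfTwoSquares R) : IsSquare f.leadingCoeff := by
  obtain ⟨A, B, rfl⟩ := mem_sumsOfTwoSquares_iff.mp hf
  rcases eq_or_ne B 0 with rfl | hB
  · simpa using IsSquare.sq A.leadingCoeff
  have hdegA : (A ^ 2).natDegree = 2 * A.natDegree := natDegree_pow A 2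
  have hdegB : (X * B ^ 2).natDegree = 2 * B.natDegree + 1 := by
    rw [natDegree_X_mul (pow_ne_zero 2 hB), natDegree_pow]
  rcases lt_or_ge B.natDegree A.natDegree with hlt | hle
  · rw [leadingCoeff_add_of_degree_lt' (degree_lt_degree (by lia)), leadingCoeff_pow]
    exact .sq _
  · rw [leadingCoeff_add_of_degree_lt (degree_lt_degree (by lia)), leadingCoeff_mul,
      leadingCoeff_X, one_mul, leadingCoeff_pow]
    exact .sq _

variable {F : Type*} [Field F]

theorem monic_mem_sumsOfTwoSquares_of_associated {f g : F[X]} (hf : f.Monic)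
    (hg : g ∈ sumsOfTwoSquares F) (hgf : Associated g f) : f ∈ sumsOfTwoSquares F := by
  classical
  have hf_eq : f = g * C g.leadingCoeff⁻¹ := calc
    f = normalize f := hf.normalize_eq_self.symm
    _ = normalize g := normalize_eq_normalize hgf.symm.dvd hgf.dvd
    _ = g * C g.leadingCoeff⁻¹ := by
      rw [normalize_apply, coe_normUnit_of_ne_zero (hgf.ne_zero_iff.mpr hf.ne_zero)]
  rw [hf_eq]
  exact mul_mem hg
    (C_mem_sumsOfTwoSquares (isSquare_leadingCoeff_of_mem_sumsOfTwoSquares hg).inv)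

theorem mem_sumsOfTwoSquares_of_not_irreducible_comp {P : F[X]} (hPm : P.Monic)
    (hP : Irreducible P) (hred : ¬ Irreducible (P.comp (-(X ^ 2)))) : P ∈ sumsOfTwoSquares F := by
  rw [← irreducible_algebraMap_iff_comp_neg_X_sq] at hred
  obtain ⟨z, hz⟩ := exists_associated_norm_of_not_irreducible_algebraMap hP.prime hred
  exact monic_mem_sumsOfTwoSquares_of_associated hPm ⟨z, rfl⟩ hz

theorem mem_sumsOfTwoSquares_of_even_multiplicity {f : F[X]} (hlc : IsSquare f.leadingCoeff)
    (heven : ∀ P : F[X], P.Monic → Irreducible P → Irreducible (P.comp (-(X ^ 2))) →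
      ∀ k : ℕ, P ^ k ∣ f → ¬ P ^ (k + 1) ∣ f → Even k) :
    f ∈ sumsOfTwoSquares F := by
  classical
  rcases eq_or_ne f 0 with rfl | hf0
  · simpa using sq_mem_sumsOfTwoSquares (0 : F[X])
  rw [← leadingCoeff_mul_prod_normalizedFactors f, Finset.prod_multiset_count]
  refine mul_mem (C_mem_sumsOfTwoSquares hlc) (prod_mem fun P hP ↦ ?_)
  obtain ⟨hirr, hmonic, -⟩ :=
    (Polynomial.mem_normalizedFactors_iff hf0).mp (Multiset.mem_toFinset.mp hP)
  by_cases hinert : Irreducible (P.comp (-(X ^ 2)))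
  · have hmult : FiniteMultiplicity P f := .of_prime_left hirr.prime hf0
    have heven_mult : Even (multiplicity P f) := heven P hmonic hirr hinert _
      (pow_multiplicity_dvd P f) (hmult.not_pow_dvd_of_multiplicity_lt (Nat.lt_succ_self _))
    have hcount : (UniqueFactorizationMonoid.normalizedFactors f).count P = multiplicity P f := by
      rw [UniqueFactorizationMonoid.multiplicity_eq_count_normalizedFactors hirr hf0,
        hmonic.normalize_eq_self]
    obtain ⟨m, hm⟩ := even_iff_exists_two_mul.mp heven_mult
    rw [hcount, hm, mul_comm, pow_mul]
    exact sq_mem_sumsOfTwoSquares _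
  · exact pow_mem (mem_sumsOfTwoSquares_of_not_irreducible_comp hmonic hirr hinert) _

theorem sum_of_two_squares_iff_even_multiplicity_general (f : F[X]) :
    (∃ A B : F[X], f = A ^ 2 + X * B ^ 2) ↔
      IsSquare f.leadingCoeff ∧
        ∀ P : F[X], P.Monic → Irreducible P → Irreducible (P.comp (-(X ^ 2))) →
          ∀ k : ℕ, P ^ k ∣ f → ¬ P ^ (k + 1) ∣ f → Even k := by
  rw [← mem_sumsOfTwoSquares_iff]
  refine ⟨fun hf ↦ ⟨isSquare_leadingCoeff_of_mem_sumsOfTwoSquares hf, ?_⟩,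
    fun ⟨hlc, heven⟩ ↦ mem_sumsOfTwoSquares_of_even_multiplicity hlc heven⟩
  obtain ⟨z, rfl⟩ := hf
  intro P _ _ hinert k
  exact even_of_pow_dvd_norm (prime_algebraMap_iff_comp_neg_X_sq.mpr hinert.prime)

end SumsOfTwoSquares

/-- **Fermat's theorem for `F_q[T]`.** A monic `f ∈ F_q[T]` (with `q` odd) is of the form
`A² + T·B²` if and only if every monic irreducible `P` with `P(-T²)` irreducible appears in
the prime factorization of `f` with even multiplicity. -/
theorem sum_of_two_squares_iff_even_multiplicity
    (F : Type) [Field F] [Fintype F] (hodd : Odd (Fintype.card F))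
    (f : Polynomial F) (hf : f.Monic) :
    (∃ A B : Polynomial F, f = A ^ 2 + Polynomial.X * B ^ 2) ↔
      ∀ P : Polynomial F, P.Monic → Irreducible P →
        Irreducible (P.comp (-(Polynomial.X ^ 2))) →
        ∀ k : ℕ, P ^ k ∣ f → ¬ P ^ (k + 1) ∣ f → Even k := by
  simpa [hf.leadingCoeff] using sum_of_two_squares_iff_even_multiplicity_general f
end

section
/- For every integer n ≥ 1, the cardinality of X_n equals (2n)!/(2^n · n!); equivalently, #X_n / (2^n · n!) = binom(2n, n)/4^n. -/
/-- `X n` is the set of pairs `(ξ, π)` with `π` a permutation of `{1,…,n}` and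
`ξ : {1,…,n} → {±1}` such that the product of `ξ` over every orbit of `π` equals `1`. -/
def XSet (n : ℕ) : Set ((Fin n → ℤˣ) × Equiv.Perm (Fin n)) :=
  {p | ∀ i : Fin n,
    (∏ j ∈ Finset.univ.filter (fun j => p.2.SameCycle i j), p.1 j) = 1}

/-!
A labelling `ξ` of the points by elements of a commutative group `G` has trivial product over every
orbit of `π` exactly when it is a coboundary, `ξ i = f (π i) / f i`: take for `f i` the product of
the labels met on the way from a base point of the orbit to `i`. Being a coboundary is almost
preserved when a point is removed from its orbit and its label multiplied into that of its
predecessor. The label and the successor of the removed point can be chosen freely, except that a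
removed fixed point must carry the label `1`, so that passing from `n` to `n + 1` points multiplies
the number of pairs by `n * |G| + 1`. For `G = {±1}` this yields the product of the first `n` odd
numbers.
-/

open Finset Function
open Equiv (Perm)
open scoped Nat

section BirkhoffSum

variable {α M : Type*} [AddCommMonoid M]

theorem birkhoffSum_periodic {f : α → α} {g : α → M} {x : α}
    (h : birkhoffSum f g (minimalPeriod f x) x = 0) :
    Periodic (fun m => birkhoffSum f g m x) (minimalPeriod f x) := by
  intro m
  change birkhoffSum f g (m + minimalPeriod f x) x = birkhoffSum f g m x
  rw [add_comm, birkhoffSum_add, h, iterate_minimalPeriod, zero_add]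

theorem birkhoffSum_eq_of_iterate_eq {f : α → α} {g : α → M} {x : α} (hx : x ∈ periodicPts f)
    (h : birkhoffSum f g (minimalPeriod f x) x = 0) {a b : ℕ} (hab : f^[a] x = f^[b] x) :
    birkhoffSum f g a x = birkhoffSum f g b x := by
  have hpos := minimalPeriod_pos_of_mem_periodicPts hx
  have hmod : a % minimalPeriod f x = b % minimalPeriod f x := by
    rw [← iterate_eq_iterate_iff_of_lt_minimalPeriod (Nat.mod_lt _ hpos) (Nat.mod_lt _ hpos),
      iterate_mod_minimalPeriod_eq, iterate_mod_minimalPeriod_eq, hab]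
  have hper := birkhoffSum_periodic h
  exact (hper.map_mod_nat a).symm.trans (hmod ▸ hper.map_mod_nat b)

theorem sum_sameCycle_eq_birkhoffSum [Fintype α] [DecidableEq α] (π : Perm α) (g : α → M) (x : α) :
    ∑ y with π.SameCycle x y, g y = birkhoffSum π g (minimalPeriod π x) x := by
  have hpos := minimalPeriod_pos_of_mem_periodicPts (π.injective.mem_periodicPts x)
  have hcycle : univ.filter (π.SameCycle x) = (range (minimalPeriod π x)).image (π^[·] x) := by
    ext y
    simp only [mem_filter, mem_univ, true_and, mem_image, mem_range]
    constructor
    · intro h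
      obtain ⟨m, rfl⟩ := h.exists_nat_pow_eq
      exact ⟨m % minimalPeriod π x, Nat.mod_lt _ hpos, iterate_mod_minimalPeriod_eq⟩
    · rintro ⟨k, -, rfl⟩
      exact ⟨k, by rw [zpow_natCast, Perm.iterate_eq_pow]⟩
  rw [hcycle, sum_image, birkhoffSum]
  simpa using iterate_injOn_Iio_minimalPeriod

end BirkhoffSum

theorem exists_apply_eq_add_iff_sum_sameCycle_eq_zero {α A : Type*} [Fintype α] [DecidableEq α]
    [AddCommGroup A] (π : Perm α) (g : α → A) :
    (∃ f : α → A, ∀ i, f (π i) = g i + f i) ↔ ∀ i, ∑ j with π.SameCycle i j, g j = 0 := by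
  constructor
  · rintro ⟨f, hf⟩ i
    have hg : ∀ j, g j = f (π j) - f j := fun j => eq_sub_of_add_eq (hf j).symm
    have hinv : ∑ j with π.SameCycle i j, f (π j) = ∑ j with π.SameCycle i j, f j :=
      sum_equiv π (by simp) (fun _ _ => rfl)
    simp only [hg, sum_sub_distrib, hinv, sub_self]
  · intro h
    let base (i : α) : α := (Quotient.mk (Perm.SameCycle.setoid π) i).out
    have hbase (i : α) : π.SameCycle (base i) i := Quotient.mk_out (s := Perm.SameCycle.setoid π) i
    have hbase_apply (i : α) : base (π i) = base i :=
      congrArg Quotient.out (Quotient.sound (Perm.sameCycle_apply_left.2 (.refl π i)))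
    choose time htime using fun i => (hbase i).exists_nat_pow_eq
    refine ⟨fun i => birkhoffSum π g (time i) (base i), fun i => ?_⟩
    have hreturn : π^[time (π i)] (base i) = π^[time i + 1] (base i) := by
      rw [iterate_succ_apply', Perm.iterate_eq_pow, Perm.iterate_eq_pow, htime, ← hbase_apply,
        htime]
    have hperiod : birkhoffSum π g (minimalPeriod π (base i)) (base i) = 0 := by
      rw [← sum_sameCycle_eq_birkhoffSum, h]
    calc birkhoffSum π g (time (π i)) (base (π i))
        = birkhoffSum π g (time i + 1) (base i) := by
          rw [hbase_apply]
          exact birkhoffSum_eq_of_iterate_eq (π.injective.mem_periodicPts _) hperiod hreturn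
      _ = g i + birkhoffSum π g (time i) (base i) := by
          rw [birkhoffSum_succ, Perm.iterate_eq_pow, htime, add_comm]

/-- The labelling `ξ` is a multiplicative coboundary for `π`. For commutative `G` this says that
`ξ` is the quotient of `f ∘ π` by `f`; writing `ξ i` on the left fixes the convention for
noncommutative `G`. -/
def IsCoboundary {α G : Type*} [Group G] (π : Perm α) (ξ : α → G) : Prop :=
  ∃ f : α → G, ∀ i, f (π i) = ξ i * f i

theorem isCoboundary_iff_prod_sameCycle_eq_one {α G : Type*} [Fintype α] [DecidableEq α]
    [CommGroup G] (π : Perm α) (ξ : α → G) :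
    IsCoboundary π ξ ↔ ∀ i, ∏ j with π.SameCycle i j, ξ j = 1 :=
  exists_apply_eq_add_iff_sum_sameCycle_eq_zero (A := Additive G) π ξ

section RemoveNone

variable {α G : Type*} [Group G]

/-- The labelling induced on `α` when the point `none` is removed from its `π`-orbit: the label of
`none` is multiplied into the label of its predecessor. -/
def contractNone (π : Perm (Option α)) (ξ : Option α → G) (a : α) : G :=
  (if π (some a) = none then ξ none else 1) * ξ (some a)

theorem isCoboundary_option_iff (π : Perm (Option α)) (ξ : Option α → G) :
    IsCoboundary π ξ ↔
      (π none = none → ξ none = 1) ∧ IsCoboundary (Equiv.removeNone π) (contractNone π ξ) := by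
  constructor
  · rintro ⟨f, hf⟩
    refine ⟨fun hnone => by simpa [hnone] using hf none, fun a => f (some a), fun a => ?_⟩
    change f (some (Equiv.removeNone π a)) = contractNone π ξ a * f (some a)
    cases ha : π (some a) with
    | none =>
      have hsucc := hf (some a)
      rw [ha] at hsucc
      rw [Equiv.removeNone_none π ha, hf, hsucc, contractNone, if_pos ha, mul_assoc]
    | some b =>
      rw [Equiv.removeNone_some π ⟨b, ha⟩, hf, contractNone, if_neg (by simp [ha]), one_mul]
  · rintro ⟨hnone, f, hf⟩
    refine ⟨fun x => x.elim ((ξ none)⁻¹ * (π none).elim 1 f) f, ?_⟩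
    rintro (_ | a)
    · cases h : π none with
      | none => simp [hnone h]
      | some b => simp
    · have hfa := hf a
      cases ha : π (some a) with
      | none =>
        rw [contractNone, if_pos ha] at hfa
        simp [← Equiv.removeNone_none π ha, hfa, mul_assoc]
      | some b =>
        rw [contractNone, if_neg (by simp [ha]), one_mul] at hfa
        have hb : Equiv.removeNone π a = b := by simpa [ha] using Equiv.removeNone_some π ⟨b, ha⟩
        simpa [hb] using hfa

/-- A labelled permutation of `Option α` amounts to the label and the successor of `none` together
with the labelled permutation of `α` left when `none` is removed from its orbit. -/
def labelledPermOptionEquiv [DecidableEq α] :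
    (Option α → G) × Perm (Option α) ≃ (G × Option α) × ((α → G) × Perm α) where
  toFun p := ((p.1 none, p.2 none), (contractNone p.2 p.1, Equiv.removeNone p.2))
  invFun q :=
    let π := Perm.decomposeOption.symm (q.1.2, q.2.2)
    (fun x => x.elim q.1.1 fun a => (if π (some a) = none then q.1.1 else 1)⁻¹ * q.2.1 a, π)
  left_inv := by
    rintro ⟨ξ, π⟩
    have hπ : Perm.decomposeOption.symm (π none, Equiv.removeNone π) = π :=
      Perm.decomposeOption.symm_apply_apply π
    simp only [hπ, Prod.mk.injEq, and_true]
    funext x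
    cases x with
    | none => rfl
    | some a => exact inv_mul_cancel_left _ _
  right_inv := by
    rintro ⟨⟨s, x⟩, η, e⟩
    have hπ := Perm.decomposeOption.apply_symm_apply (x, e)
    rw [Perm.decomposeOption_apply, Prod.mk.injEq] at hπ
    simp only [hπ.1, hπ.2, Prod.mk.injEq, and_true]
    exact ⟨rfl, funext fun a => mul_inv_cancel_left _ _⟩

end RemoveNone

section Counting

variable {α β G : Type*}

theorem card_snd_eq_none_imp_fst_eq_one [One G] [Finite α] [Finite G] :
    Nat.card {q : G × Option α // q.2 = none → q.1 = 1} = Nat.card α * Nat.card G + 1 := by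
  let e : {q : G × Option α // q.2 = none → q.1 = 1} ≃ Option (α × G) :=
    { toFun q := q.1.2.map fun a => (a, q.1.1)
      invFun x := x.elim ⟨(1, none), fun _ => rfl⟩ fun y => ⟨(y.2, some y.1), by simp⟩
      left_inv
        | ⟨(_, none), h⟩ => Subtype.ext (Prod.ext (h rfl).symm rfl)
        | ⟨(_, some _), _⟩ => rfl
      right_inv := by rintro (_ | _) <;> rfl }
  rw [Nat.card_congr e, Finite.card_option, Nat.card_prod]

variable [Group G]

theorem card_isCoboundary_congr (e : α ≃ β) :
    Nat.card {p : (α → G) × Perm α // IsCoboundary p.2 p.1} =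
      Nat.card {p : (β → G) × Perm β // IsCoboundary p.2 p.1} := by
  refine Nat.card_congr <|
    ((e.arrowCongr (Equiv.refl G)).prodCongr e.permCongr).subtypeEquiv fun p => ?_
  refine (e.arrowCongr (Equiv.refl G)).exists_congr fun f => ?_
  simp [e.forall_congr_left]

theorem card_isCoboundary_option [Finite α] [Finite G] :
    Nat.card {p : (Option α → G) × Perm (Option α) // IsCoboundary p.2 p.1} =
      (Nat.card α * Nat.card G + 1) * Nat.card {p : (α → G) × Perm α // IsCoboundary p.2 p.1} := by
  classical
  rw [← card_snd_eq_none_imp_fst_eq_one, ← Nat.card_prod]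
  exact Nat.card_congr <|
    (labelledPermOptionEquiv.subtypeEquiv fun p => isCoboundary_option_iff p.2 p.1).trans
      Equiv.subtypeProdEquivProd

theorem card_isCoboundary [Finite α] [Finite G] :
    Nat.card {p : (α → G) × Perm α // IsCoboundary p.2 p.1} =
      ∏ k ∈ range (Nat.card α), (k * Nat.card G + 1) := by
  induction α using Finite.induction_empty_option with
  | of_equiv e ih => rw [← card_isCoboundary_congr e, ih, Nat.card_congr e]
  | h_empty =>
    rw [Nat.card_of_isEmpty (α := PEmpty), range_zero, prod_empty, Nat.card_eq_one_iff_unique]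
    exact ⟨inferInstance, ⟨⟨(1, 1), 1, nofun⟩⟩⟩
  | h_option ih =>
    rw [card_isCoboundary_option, ih, Finite.card_option, prod_range_succ, mul_comm]

end Counting

theorem prod_range_two_mul_add_one_mul (n : ℕ) :
    (∏ k ∈ range n, (k * 2 + 1)) * (2 ^ n * n !) = (2 * n)! := by
  induction n with
  | zero => simp
  | succ n ih =>
    rw [prod_range_succ, mul_add_one 2 n, Nat.factorial_succ (2 * n + 1),
      Nat.factorial_succ (2 * n), ← ih, Nat.factorial_succ]
    ring

theorem prod_range_two_mul_add_one_div {K : Type*} [Field K] [CharZero K] (n : ℕ) :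
    ((∏ k ∈ range n, (k * 2 + 1) : ℕ) : K) / (2 ^ n * n !) = ((2 * n).choose n : K) / 4 ^ n := by
  have hchoose : ((2 * n).choose n : K) * n ! * n ! = (2 * n)! := by
    exact_mod_cast two_mul n ▸ Nat.add_choose_mul_factorial_mul_factorial n n
  have hfour : (4 : K) ^ n = 2 ^ n * 2 ^ n := by rw [← mul_pow]; norm_num
  have hfactorial : (n ! : K) ≠ 0 := mod_cast n.factorial_ne_zero
  have hprod : ((∏ k ∈ range n, (k * 2 + 1) : ℕ) : K) * (2 ^ n * n !) =
      (2 * n).choose n * n ! * n ! :=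
    hchoose ▸ mod_cast prod_range_two_mul_add_one_mul n
  rw [hfour, div_eq_div_iff (by simp [hfactorial]) (by simp)]
  apply mul_right_cancel₀ hfactorial
  linear_combination 2 ^ n * hprod

theorem card_XSet_general {α G : Type*} [Fintype α] [DecidableEq α] [CommGroup G] [Finite G] :
    Nat.card {p : (α → G) × Perm α | ∀ i, ∏ j with p.2.SameCycle i j, p.1 j = 1} =
      ∏ k ∈ range (Nat.card α), (k * Nat.card G + 1) := by
  simp only [← isCoboundary_iff_prod_sameCycle_eq_one]
  exact card_isCoboundary

/-- **Cardinality of `X_n`.** `#X_n = (2n)!/(2ⁿ·n!)`, equivalently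
`#X_n/(2ⁿ·n!) = binom(2n,n)/4ⁿ`. -/
theorem card_XSet (n : ℕ) (hn : 1 ≤ n) :
    Nat.card (XSet n) = Nat.factorial (2 * n) / (2 ^ n * Nat.factorial n) ∧
    (Nat.card (XSet n) : ℝ) / (2 ^ n * Nat.factorial n) =
      (Nat.choose (2 * n) n : ℝ) / 4 ^ n := by
  have hcard : Nat.card (XSet n) = ∏ k ∈ range n, (k * 2 + 1) :=
    (card_XSet_general (α := Fin n) (G := ℤˣ)).trans (by simp)
  rw [hcard]
  exact ⟨Nat.eq_div_of_mul_eq_left (by positivity) (prod_range_two_mul_add_one_mul n),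
    prod_range_two_mul_add_one_div n⟩
end

section
/- Let K be a field of characteristic different from 2 and let f ∈ K[T] be a separable polynomial with f(0) ≠ 0. Then the polynomial f(−T²) ∈ K[T] is separable. -/
/-!
If `f(b)` is a unit, then `f` is coprime to `X - b`, and substituting `g` shows that `f(g)` is
coprime to `g - b`. When `g'` divides `g - b`, as for `g = a Xⁿ + b` with `n` invertible, `f(g)` is
therefore coprime to `g'`. It is coprime to `f'(g)` because `f` is separable, hence to
`f(g)' = g' f'(g)`.
-/

open Polynomial

section CommRing

variable {R : Type*} [CommRing R]

theorem isCoprime_X_sub_C_iff_isUnit_eval {f : R[X]} {b : R} :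
    IsCoprime f (X - C b) ↔ IsUnit (f.eval b) := by
  constructor
  · intro h
    simpa [isCoprime_zero_right] using h.map (evalRingHom b)
  · intro h
    obtain ⟨q, hq⟩ : X - C b ∣ f - C (f.eval b) := X_sub_C_dvd_sub_C_eval
    have hC : IsCoprime (C (f.eval b)) (X - C b) :=
      isCoprime_one_left.of_isCoprime_of_dvd_left (h.map C).dvd
    rw [sub_eq_iff_eq_add'.mp hq]
    exact hC.add_mul_left_left q

theorem isCoprime_comp_sub_C {f : R[X]} {b : R} (hb : IsUnit (f.eval b)) (g : R[X]) :
    IsCoprime (f.comp g) (g - C b) := by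
  simpa using (isCoprime_X_sub_C_iff_isUnit_eval.mpr hb).map (compRingHom g)

theorem separable_comp_of_isCoprime_derivative {f g : R[X]} (hf : f.Separable)
    (hfg : IsCoprime (f.comp g) (derivative g)) : (f.comp g).Separable := by
  rw [separable_def, derivative_comp]
  exact hfg.mul_right (IsCoprime.map hf (compRingHom g))

theorem derivative_C_mul_X_pow_dvd (a : R) {n : ℕ} (hn : IsUnit (n : R)) :
    derivative (C a * X ^ n) ∣ C a * X ^ n := by
  rw [derivative_C_mul_X_pow, C_mul]
  exact mul_dvd_mul ((hn.map C).mul_right_dvd.mpr dvd_rfl) (pow_dvd_pow X n.pred_le)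

theorem separable_comp_neg_X_sq_general {f : R[X]} (hf : f.Separable) {b : R}
    (hb : IsUnit (f.eval b)) (a : R) {n : ℕ} (hn : IsUnit (n : R)) :
    (f.comp (C a * X ^ n + C b)).Separable := by
  have hdvd : derivative (C a * X ^ n + C b) ∣ (C a * X ^ n + C b) - C b := by
    rw [derivative_add, derivative_C, add_zero, add_sub_cancel_right]
    exact derivative_C_mul_X_pow_dvd a hn
  exact separable_comp_of_isCoprime_derivative hf
    ((isCoprime_comp_sub_C hb _).of_isCoprime_of_dvd_right hdvd)

end CommRing

/-- If `char K ≠ 2` and `f ∈ K[T]` is separable with `f(0) ≠ 0`, then `f(-T²)` is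
separable. -/
theorem separable_comp_neg_X_sq (K : Type) [Field K] (hchar : ringChar K ≠ 2)
    (f : Polynomial K) (hsep : f.Separable) (h0 : f.eval 0 ≠ 0) :
    (f.comp (-(Polynomial.X ^ 2))).Separable := by
  have h2 : IsUnit ((2 : ℕ) : K) := (Ring.two_ne_zero hchar).isUnit
  simpa using separable_comp_neg_X_sq_general hsep h0.isUnit (-1) h2
end

section
/- Let F be a finite field of odd cardinality, let P ∈ F[T] be a monic irreducible polynomial with P(0) ≠ 0, and let ω be a root of P in an algebraic closure of F. Then P(−T²) is reducible in F[T] if and only if −ω is a square in the field F(ω). -/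
/-!
The heart of the matter is Capelli's lemma: if `K(α) = E` and `f` is irreducible over `K` with root
`α`, then `f ∘ g` is irreducible over `K` if and only if `g - α` is irreducible over `E`. Indeed, a
root `y` of `g - α` is a root of `f ∘ g`, and irreducibility of either polynomial says that `y` has
the largest possible degree; these conditions agree because `K(y) = E(y)` has degree
`deg f * [E(y) : E]` over `K`. For `g = -T ^ p` with `p` prime, `g - ω` is reducible exactly when
`-ω` is a `p`-th power.
-/

open Polynomial IntermediateField Module

section Capelli

variable {K E Ω : Type*} [Field K] [Field E] [Field Ω] [Algebra K E]

lemma irreducible_iff_finrank_adjoin_eq_natDegree {p : K[X]} {α : E} (hp : p ≠ 0)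
    (hα : aeval α p = 0) : Irreducible p ↔ finrank K K⟮α⟯ = p.natDegree := by
  have hint : IsIntegral K α := IsAlgebraic.isIntegral ⟨p, hp, hα⟩
  have hdvd : minpoly K α ∣ p := minpoly.dvd K α hα
  rw [adjoin.finrank hint]
  constructor
  · intro hirr
    have hassoc := (minpoly.irreducible hint).associated_of_dvd hirr hdvd
    exact natDegree_eq_of_degree_eq (degree_eq_degree_of_associated hassoc)
  · intro hdeg
    have hassoc := associated_of_dvd_of_natDegree_le hdvd hp hdeg.ge
    exact hassoc.irreducible (minpoly.irreducible hint)

lemma adjoin_simple_gen_eq_top (α : E) : K⟮AdjoinSimple.gen K α⟯ = ⊤ :=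
  lift_injective _ <| by rw [lift_adjoin_simple, lift_top, AdjoinSimple.coe_gen]

variable [Algebra E Ω] [Algebra K Ω] [IsScalarTower K E Ω]

lemma algebraMap_mem_of_adjoin_simple_eq_top {α : E} (hα : K⟮α⟯ = ⊤) {M : IntermediateField K Ω}
    (hM : algebraMap E Ω α ∈ M) (e : E) : algebraMap E Ω e ∈ M :=
  have hle : K⟮α⟯ ≤ M.comap (IsScalarTower.toAlgHom K E Ω) := adjoin_simple_le_iff.mpr hM
  hle (hα ▸ mem_top)

lemma restrictScalars_adjoin_eq_of_algebraMap_mem {S : Set Ω}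
    (hE : ∀ e : E, algebraMap E Ω e ∈ adjoin K S) :
    (adjoin E S).restrictScalars K = adjoin K S := by
  refine le_antisymm ?_ (adjoin_le_iff.mpr (subset_adjoin E S))
  have hle : adjoin E S ≤ (adjoin K S).toSubfield.toIntermediateField hE :=
    adjoin_le_iff.mpr (subset_adjoin K S)
  exact hle

lemma finrank_mul_finrank_adjoin_of_algebraMap_mem {S : Set Ω}
    (hE : ∀ e : E, algebraMap E Ω e ∈ adjoin K S) :
    finrank K E * finrank E (adjoin E S) = finrank K (adjoin K S) := by
  rw [← restrictScalars_adjoin_eq_of_algebraMap_mem hE]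
  exact finrank_mul_finrank K E (adjoin E S)

theorem irreducible_comp_iff_irreducible_map_sub_C {f g : K[X]} {α : E} (hf : Irreducible f)
    (hfα : aeval α f = 0) (hα : K⟮α⟯ = ⊤) (hg : g.natDegree ≠ 0) :
    Irreducible (f.comp g) ↔ Irreducible (g.map (algebraMap K E) - C α) := by
  have hdeg : (g.map (algebraMap K E) - C α).natDegree = g.natDegree := by
    rw [natDegree_sub_C, natDegree_map]
  have hsub : g.map (algebraMap K E) - C α ≠ 0 := ne_zero_of_natDegree_gt (hdeg ▸ hg.bot_lt)
  have hcomp : f.comp g ≠ 0 := ne_zero_of_natDegree_gt <|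
    natDegree_comp (p := f) (q := g) ▸ Nat.mul_pos hf.natDegree_pos hg.bot_lt
  obtain ⟨y, hy⟩ : ∃ y : AlgebraicClosure E, aeval y (g.map (algebraMap K E) - C α) = 0 :=
    IsAlgClosed.exists_aeval_eq_zero _ _ (degree_ne_of_natDegree_ne (hdeg ▸ hg))
  have hgy : aeval y g = algebraMap E (AlgebraicClosure E) α := by
    simpa [sub_eq_zero] using hy
  have hcomp_y : aeval y (f.comp g) = 0 := by
    rw [aeval_comp, hgy, aeval_algebraMap_apply, hfα, map_zero]
  have hmem : algebraMap E (AlgebraicClosure E) α ∈ K⟮y⟯ :=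
    hgy ▸ algebra_adjoin_le_adjoin K {y} (aeval_mem_adjoin_singleton K y)
  have hE : finrank K E = f.natDegree := by
    rw [← (irreducible_iff_finrank_adjoin_eq_natDegree hf.ne_zero hfα).mp hf, hα, finrank_top']
  rw [irreducible_iff_finrank_adjoin_eq_natDegree hcomp hcomp_y,
    irreducible_iff_finrank_adjoin_eq_natDegree hsub hy, hdeg, natDegree_comp, ← hE,
    ← finrank_mul_finrank_adjoin_of_algebraMap_mem
      (algebraMap_mem_of_adjoin_simple_eq_top hα hmem)]
  exact mul_right_inj' (hE ▸ hf.natDegree_pos.ne')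

end Capelli

theorem irreducible_neg_X_pow_sub_C_iff_of_prime {K : Type*} [Field K] {p : ℕ} (hp : p.Prime)
    {a : K} : Irreducible (-X ^ p - C a) ↔ ∀ b, b ^ p ≠ -a := by
  have hneg : -X ^ p - C a = -(X ^ p - C (-a)) := by rw [C_neg]; ring
  rw [hneg, (Associated.refl _).neg_left.irreducible_iff,
    X_pow_sub_C_irreducible_iff_of_prime hp]

theorem comp_neg_X_sq_reducible_iff_neg_root_isSquare_general {F L : Type*} [Field F] [Field L]
    [Algebra F L] {P : F[X]} (hirr : Irreducible P) {ω : L} (hω : aeval ω P = 0) {p : ℕ}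
    (hp : p.Prime) : ¬ Irreducible (P.comp (-X ^ p)) ↔ ∃ x ∈ F⟮ω⟯, x ^ p = -ω := by
  have hroot : aeval (AdjoinSimple.gen F ω) P = 0 := by
    rwa [← ZeroMemClass.coe_eq_zero, AdjoinSimple.coe_aeval_gen_apply]
  have hdeg : (-X ^ p : F[X]).natDegree ≠ 0 := by
    rw [natDegree_neg, natDegree_X_pow]
    exact hp.ne_zero
  rw [irreducible_comp_iff_irreducible_map_sub_C hirr hroot (adjoin_simple_gen_eq_top ω) hdeg,
    Polynomial.map_neg, Polynomial.map_pow, map_X, irreducible_neg_X_pow_sub_C_iff_of_prime hp]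
  simp [Subtype.ext_iff]

/-- Let `F` be a finite field of odd cardinality, `P ∈ F[T]` monic irreducible with
`P(0) ≠ 0`, and `ω` a root of `P` in an algebraic closure of `F`. Then `P(-T²)` is
reducible in `F[T]` if and only if `-ω` is a square in `F(ω)`. -/
theorem comp_neg_X_sq_reducible_iff_neg_root_isSquare
    (F : Type) [Field F] [Fintype F] (hodd : Odd (Fintype.card F))
    (P : Polynomial F) (hP : P.Monic) (hirr : Irreducible P) (h0 : P.eval 0 ≠ 0)
    (ω : AlgebraicClosure F) (hω : Polynomial.aeval ω P = 0) :
    ¬ Irreducible (P.comp (-(Polynomial.X ^ 2))) ↔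
      ∃ x ∈ IntermediateField.adjoin F {ω}, x ^ 2 = -ω :=
  comp_neg_X_sq_reducible_iff_neg_root_isSquare_general hirr hω Nat.prime_two
end

section
/- Let K be a field of characteristic different from 2, let f ∈ K[T] be a monic separable polynomial of degree n with f(0) ≠ 0, let L be a splitting field of f over K with roots α₁, …, α_n, and set yᵢ = −αᵢ, so that f(T) = ∏_{i=1}^n (T + yᵢ). Let G = Gal(L|K), acting on {1, …, n} through its permutation action on the roots. Assume that the only G-invariant subspaces of F₂ⁿ (for the action of G permuting coordinates via its action on the roots) are the zero subspace, the span of (1, …, 1), the subspace of vectors with coordinate sum 0, and F₂ⁿ itself. If f(0) and y₁ are square-independent in L, then the Galois group of f(−T²) over K has order 2ⁿ · |G|. -/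
/-!
Put `y i = -α i` and let `s i` be a square root of `y i` in the splitting field `M` of `f(-T²)`.
Then `M = L(s i)`, and by Kummer theory `[M : L] = 2 ^ n` as soon as the `y i` are independent in
`Lˣ / (Lˣ)²`: an automorphism of `M` over `L` is determined by the signs by which it multiplies
the `s i`, and if not all sign vectors occurred, some exponent vector `v ≠ 0` would annihilate
those that do, so that `∏ s i ^ v i` would be fixed by the Galois group and `∏ y i ^ v i` would be
a square in `L`.

The exponent vectors of square monomials form a `Gal(L/K)`-invariant subspace of `𝔽₂ⁿ`. Since
neither `f(0) = ∏ y i` nor `f(0) * y i₀` is a square, it contains neither `(1, …, 1)` nor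
`(1, …, 1) + e i₀`. By parity each of the three nonzero candidates contains one of these two
vectors, so the subspace is zero.
-/

section SquareClass

variable {G ι : Type*} [CommGroup G]

variable (G) in
/-- The group `G / G²`, written additively so that it is a vector space over `𝔽₂`. -/
abbrev SquareClass : Type _ := Additive G ⧸ AddSubgroup.even (Additive G)

instance : Module (ZMod 2) (SquareClass G) :=
  QuotientAddGroup.zmodModule fun x => ⟨x, two_nsmul x⟩

/-- The class of a group element modulo squares. -/
def squareClass : Additive G →+ SquareClass G := QuotientAddGroup.mk' _

lemma squareClass_eq_zero_iff {g : G} : squareClass (.ofMul g) = 0 ↔ IsSquare g := by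
  simp [squareClass]

/-- Square-independence of a finite family, as linear independence over `𝔽₂` of its square
classes; `squareIndependent_iff` is the usual formulation with exponents in `{0, 1}`. -/
def SquareIndependent (y : ι → G) : Prop :=
  LinearIndependent (ZMod 2) fun i => squareClass (.ofMul (y i))

lemma SquareIndependent.injective {y : ι → G} (hy : SquareIndependent y) :
    Function.Injective y :=
  .of_comp (LinearIndependent.injective hy)

variable [Fintype ι]

lemma sum_smul_squareClass (y : ι → G) (v : ι → ZMod 2) :
    ∑ i, v i • squareClass (.ofMul (y i)) = squareClass (.ofMul (∏ i, y i ^ (v i).val)) := by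
  simp only [ofMul_prod, ofMul_pow, map_sum, map_nsmul, ← Nat.cast_smul_eq_nsmul (ZMod 2),
    ZMod.natCast_zmod_val]

/-- The space of exponent vectors modulo `2` whose associated monomial in `y` is a square. -/
def squareRelations (y : ι → G) : Submodule (ZMod 2) (ι → ZMod 2) :=
  LinearMap.ker (Fintype.linearCombination (ZMod 2) fun i => squareClass (.ofMul (y i)))

lemma mem_squareRelations_iff {y : ι → G} {v : ι → ZMod 2} :
    v ∈ squareRelations y ↔ IsSquare (∏ i, y i ^ (v i).val) := by
  rw [squareRelations, LinearMap.mem_ker, Fintype.linearCombination_apply, sum_smul_squareClass,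
    squareClass_eq_zero_iff]

lemma squareRelations_eq_bot_iff {y : ι → G} : squareRelations y = ⊥ ↔ SquareIndependent y := by
  rw [squareRelations, LinearMap.ker_eq_bot, SquareIndependent,
    linearIndependent_iff_injective_fintypeLinearCombination]

lemma squareIndependent_iff {y : ι → G} :
    SquareIndependent y ↔ ∀ v : ι → ZMod 2, IsSquare (∏ i, y i ^ (v i).val) → v = 0 := by
  simp only [← squareRelations_eq_bot_iff, Submodule.eq_bot_iff, mem_squareRelations_iff]

lemma one_mem_squareRelations_iff {y : ι → G} :
    1 ∈ squareRelations y ↔ IsSquare (∏ i, y i) := by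
  simp [mem_squareRelations_iff, ZMod.val_one]

lemma one_add_single_mem_squareRelations_iff [DecidableEq ι] {y : ι → G} {i₀ : ι} :
    1 + Pi.single i₀ 1 ∈ squareRelations y ↔ IsSquare ((∏ i, y i) * y i₀) := by
  simp [squareRelations, Fintype.linearCombination_apply, ← squareClass_eq_zero_iff, add_smul,
    Finset.sum_add_distrib, Pi.single_apply, ite_smul]

lemma comp_perm_mem_squareRelations {y : ι → G} (e : G ≃* G) (π : Equiv.Perm ι)
    (h : ∀ i, e (y i) = y (π i)) {v : ι → ZMod 2} (hv : v ∈ squareRelations y) :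
    v ∘ π ∈ squareRelations y := by
  rw [mem_squareRelations_iff] at hv ⊢
  have he : e (∏ i, y i ^ (v (π i)).val) = ∏ i, y i ^ (v i).val := by
    simp only [map_prod, map_pow, h, Equiv.prod_comp π fun i => y i ^ (v i).val]
  simpa [← he] using hv.map e.symm

end SquareClass

lemma isSquare_units_val_iff {M : Type*} [CommMonoid M] {u : Mˣ} :
    IsSquare (u : M) ↔ IsSquare u := by
  refine ⟨fun ⟨r, hr⟩ => ?_, fun h => h.map (Units.coeHom M)⟩
  have hunit : IsUnit r := isUnit_mul_self_iff.mp (hr ▸ u.isUnit)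
  exact ⟨hunit.unit, Units.ext hr⟩

section StandardSubspaces

variable {ι : Type*} [Fintype ι]

/-- The subspaces of `𝔽₂ ^ ι` that every group of coordinate permutations preserves: zero, the
constant vectors, the vectors with coordinate sum zero, and the whole space. -/
def IsStandardSubspace (V : Submodule (ZMod 2) (ι → ZMod 2)) : Prop :=
  V = ⊥ ∨ V = Submodule.span (ZMod 2) {fun _ => 1} ∨
    V = LinearMap.ker (∑ i : ι, LinearMap.proj (R := ZMod 2) (φ := fun _ : ι => ZMod 2) i) ∨
    V = ⊤

lemma one_mem_or_one_add_single_mem_ker_sum_proj [DecidableEq ι] (i₀ : ι) :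
    let V := LinearMap.ker
      (∑ i : ι, LinearMap.proj (R := ZMod 2) (φ := fun _ : ι => ZMod 2) i)
    1 ∈ V ∨ 1 + Pi.single i₀ 1 ∈ V := by
  have parity : ∀ c : ZMod 2, c = 0 ∨ c + 1 = 0 := by decide
  simpa [Finset.sum_add_distrib] using parity (Fintype.card ι)

lemma IsStandardSubspace.eq_bot [DecidableEq ι] {V : Submodule (ZMod 2) (ι → ZMod 2)}
    (hV : IsStandardSubspace V) {i₀ : ι} (hone : 1 ∉ V) (hsingle : 1 + Pi.single i₀ 1 ∉ V) :
    V = ⊥ := by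
  rcases hV with h | rfl | rfl | rfl
  · exact h
  · exact absurd (Submodule.mem_span_singleton_self _) hone
  · exact (one_mem_or_one_add_single_mem_ker_sum_proj i₀).elim (absurd · hone) (absurd · hsingle)
  · exact absurd Submodule.mem_top hone

end StandardSubspaces

section SignCharacter

/-- The character `a ↦ (-1) ^ a` of `ZMod 2`. -/
def signChar (R : Type*) [CommRing R] : AddChar (ZMod 2) R := AddChar.zmodChar 2 neg_one_sq

variable {R : Type*} [CommRing R]

lemma signChar_one : signChar R 1 = -1 := by
  simp [signChar, AddChar.zmodChar_apply, ZMod.val_one]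

lemma signChar_pow_val (a b : ZMod 2) : signChar R a ^ b.val = signChar R (b * a) := by
  rw [← AddChar.map_nsmul_eq_pow, nsmul_eq_mul, ZMod.natCast_zmod_val]

lemma map_signChar {S F : Type*} [CommRing S] [FunLike F R S] [RingHomClass F R S] (φ : F)
    (a : ZMod 2) : φ (signChar R a) = signChar S a := by
  simp [signChar, AddChar.zmodChar_apply]

lemma signChar_injective (h2 : (2 : R) ≠ 0) : Function.Injective (signChar R) := by
  refine (injective_iff_map_eq_zero (signChar R).toAddMonoidHom).mpr fun a ha => ?_
  replace ha : signChar R a = 1 := ha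
  by_contra ha0
  obtain rfl : a = 1 := (show ∀ b : ZMod 2, b ≠ 0 → b = 1 by decide) a ha0
  rw [signChar_one] at ha
  exact h2 (by linear_combination -ha)

lemma exists_eq_signChar_mul [IsDomain R] {x y : R} (h : x ^ 2 = y ^ 2) :
    ∃ a, x = signChar R a * y := by
  rcases sq_eq_sq_iff_eq_or_eq_neg.mp h with h | h
  · exact ⟨0, by simpa using h⟩
  · exact ⟨1, by simpa [signChar_one] using h⟩

end SignCharacter

section Kummer

variable {L M ι : Type*} [Field L] [Field M] [Algebra L M]

variable (L) in
/-- The sign vectors `c` such that some automorphism of `M` over `L` multiplies each `s i`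
by `(-1) ^ c i`. -/
def signVectors (s : ι → M) : Submodule (ZMod 2) (ι → ZMod 2) :=
  AddSubgroup.toZModSubmodule 2
    { carrier := {c | ∃ σ : Gal(M/L), ∀ i, σ (s i) = signChar M (c i) * s i}
      zero_mem' := ⟨1, by simp⟩
      add_mem' := by
        rintro a b ⟨σ, hσ⟩ ⟨τ, hτ⟩
        refine ⟨σ * τ, fun i => ?_⟩
        rw [AlgEquiv.mul_apply, hτ, map_mul, map_signChar, hσ, Pi.add_apply,
          AddChar.map_add_eq_mul]
        ring
      neg_mem' := by
        intro c hc
        rwa [ZModModule.neg_eq_self] }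

lemma exists_signVector {s : ι → M} {y : ι → L} (hs : ∀ i, s i ^ 2 = algebraMap L M (y i))
    (σ : Gal(M/L)) : ∃ c : ι → ZMod 2, ∀ i, σ (s i) = signChar M (c i) * s i := by
  have hsq (i) : σ (s i) ^ 2 = s i ^ 2 := by rw [← map_pow, hs, AlgEquiv.commutes]
  choose c hc using fun i => exists_eq_signChar_mul (hsq i)
  exact ⟨c, hc⟩

lemma map_prod_pow_val_eq_signChar_mul [Fintype ι] {s : ι → M} {c : ι → ZMod 2} {σ : Gal(M/L)}
    (hσ : ∀ i, σ (s i) = signChar M (c i) * s i) (v : ι → ZMod 2) :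
    σ (∏ i, s i ^ (v i).val) = signChar M (v ⬝ᵥ c) * ∏ i, s i ^ (v i).val := by
  have hsum : signChar M (v ⬝ᵥ c) = ∏ i, signChar M (v i * c i) :=
    map_prod (signChar M).toMonoidHom (fun i => Multiplicative.ofAdd (v i * c i)) _
  simp only [map_prod, map_pow, hσ, mul_pow, Finset.prod_mul_distrib, signChar_pow_val, hsum]

variable [IsGalois L M]

lemma isSquare_prod_pow_val_of_dotProduct_eq_zero [Fintype ι] {s : ι → M} {y : ι → L}
    (hs : ∀ i, s i ^ 2 = algebraMap L M (y i)) {v : ι → ZMod 2}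
    (hv : ∀ c ∈ signVectors L s, v ⬝ᵥ c = 0) : IsSquare (∏ i, y i ^ (v i).val) := by
  have hfix (σ : Gal(M/L)) : σ (∏ i, s i ^ (v i).val) = ∏ i, s i ^ (v i).val := by
    obtain ⟨c, hc⟩ := exists_signVector hs σ
    rw [map_prod_pow_val_eq_signChar_mul hc, hv c ⟨σ, hc⟩, AddChar.map_zero_eq_one, one_mul]
  obtain ⟨z, hz⟩ := (InfiniteGalois.mem_range_algebraMap_iff_fixed _).mpr hfix
  refine isSquare_iff_exists_sq _ |>.mpr ⟨z, (algebraMap L M).injective ?_⟩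
  simp only [map_prod, map_pow, hz, ← hs, ← Finset.prod_pow, pow_right_comm]

lemma signVectors_eq_top [Finite ι] {s : ι → M} {y : ι → Lˣ} (hy : SquareIndependent y)
    (hs : ∀ i, s i ^ 2 = algebraMap L M (y i)) : signVectors L s = ⊤ := by
  classical
  have := Fintype.ofFinite ι
  by_contra hne
  obtain ⟨φ, hφ0, hφ⟩ := Submodule.exists_le_ker_of_lt_top _ (lt_top_iff_ne_top.mpr hne)
  obtain ⟨v, rfl⟩ := (dotProductEquiv (ZMod 2) ι).surjective φ
  have hsq : IsSquare (∏ i, (y i : L) ^ (v i).val) :=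
    isSquare_prod_pow_val_of_dotProduct_eq_zero hs fun c hc => hφ hc
  have hv : v = 0 :=
    squareIndependent_iff.mp hy v <| isSquare_units_val_iff.mp <| by simpa using hsq
  exact hφ0 (by rw [hv, map_zero])

theorem card_gal_eq_two_pow [Fintype ι] (h2 : (2 : L) ≠ 0) {s : ι → M} {y : ι → Lˣ}
    (hy : SquareIndependent y) (hs : ∀ i, s i ^ 2 = algebraMap L M (y i))
    (hgen : Algebra.adjoin L (Set.range s) = ⊤) : Nat.card Gal(M/L) = 2 ^ Fintype.card ι := by
  have h2M : (2 : M) ≠ 0 := map_ofNat (algebraMap L M) 2 ▸ (map_ne_zero _).mpr h2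
  have hs0 (i) : s i ≠ 0 := fun h =>
    (y i).ne_zero <| (map_eq_zero (algebraMap L M)).mp <| by simp [← hs, h]
  choose c hc using exists_signVector (s := s) hs
  have hinj : Function.Injective c := by
    intro σ τ hστ
    have heq : Set.EqOn (σ : M →ₐ[L] M) τ (Set.range s) := by
      rintro _ ⟨i, rfl⟩
      simp [hc, hστ]
    exact AlgEquiv.coe_toAlgHom_injective (AlgHom.ext_of_adjoin_eq_top hgen heq)
  have hsurj : Function.Surjective c := by
    intro d
    obtain ⟨σ, hσ⟩ : d ∈ signVectors L s := signVectors_eq_top hy hs ▸ Submodule.mem_top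
    refine ⟨σ, funext fun i => signChar_injective h2M (mul_right_cancel₀ (hs0 i) ?_)⟩
    rw [← hc, hσ]
  rw [Nat.card_eq_of_bijective c ⟨hinj, hsurj⟩, Nat.card_fun, Nat.card_zmod,
    Nat.card_eq_fintype_card]

end Kummer

section Composition

open Polynomial

variable {K M : Type*} [Field K] [Field M] [Algebra K M]

lemma exists_eval_eq_of_splits_comp {p q : K[X]} (hp : p ≠ 0) (hq : q.natDegree ≠ 0)
    (hsplits : (p.comp q).Splits) {a : K} (ha : p.IsRoot a) : ∃ x, q.eval x = a := by
  have hdvd : q - C a ∣ p.comp q := by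
    simpa using map_dvd (compRingHom q) (dvd_iff_isRoot.mpr ha)
  have hpq : p.comp q ≠ 0 := by
    rw [Ne, comp_eq_zero_iff]
    rintro (h | ⟨-, h⟩)
    · exact hp h
    · exact hq (h ▸ natDegree_C _)
  have hdeg : (q - C a).degree ≠ 0 :=
    degree_ne_of_natDegree_ne (natDegree_sub_C.trans_ne hq)
  obtain ⟨x, hx⟩ := (hsplits.of_dvd hpq hdvd).exists_eval_eq_zero hdeg
  exact ⟨x, by simpa [sub_eq_zero] using hx⟩

lemma splits_map_of_isSplittingField_comp (f g : K[X]) (hg : g.natDegree ≠ 0)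
    [IsSplittingField K M (f.comp g)] : (f.map (algebraMap K M)).Splits :=
  (Gal.splits_in_splittingField_of_comp f g hg).of_algHom
    (IsSplittingField.algEquiv M (f.comp g)).symm.toAlgHom

lemma separable_comp_neg_X_sq_s9 (h2 : (2 : K) ≠ 0) {f : K[X]} (hf : f.Separable)
    (h0 : f.eval 0 ≠ 0) : (f.comp (-X ^ 2)).Separable := by
  have hderiv : derivative (f.comp (-X ^ 2)) = C (-2) * X * (derivative f).comp (-X ^ 2) := by
    simp [derivative_comp, C_ofNat, one_add_one_eq_two]
  have hX : IsCoprime (f.comp (-X ^ 2)) X := by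
    refine ((irreducible_X.coprime_iff_not_dvd).mpr fun h => h0 ?_).symm
    simpa [X_dvd_iff, coeff_zero_eq_eval_zero] using h
  have hunit : IsUnit (C (-2 : K)) := isUnit_C.mpr (neg_ne_zero.mpr h2).isUnit
  rw [Polynomial.Separable, hderiv]
  refine (isCoprime_mul_unit_left_right hunit _ _ |>.mpr hX).mul_right ?_
  simpa using IsCoprime.map hf (compRingHom (-X ^ 2))

end Composition

section SquareRoots

open Polynomial

variable {K L M ι : Type*} [Field K] [Field L] [Field M] [Algebra K L] [Algebra K M]
  [Algebra L M] [IsScalarTower K L M] [Fintype ι] {f : K[X]} {α : ι → L}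

lemma aeval_eq_zero_iff_of_map_eq_prod
    (hroots : f.map (algebraMap K L) = ∏ i, (X - C (α i))) {x : M} :
    aeval x f = 0 ↔ ∃ i, x = algebraMap L M (α i) := by
  rw [← aeval_map_algebraMap L, hroots, map_prod, Finset.prod_eq_zero_iff]
  simp [sub_eq_zero]

lemma separable_of_map_eq_prod (hroots : f.map (algebraMap K L) = ∏ i, (X - C (α i)))
    (hα : Function.Injective α) : f.Separable := by
  rw [← separable_map (algebraMap K L), hroots]
  exact separable_prod_X_sub_C_iff.mpr hα

lemma algebraMap_eval_zero_of_map_eq_prod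
    (hroots : f.map (algebraMap K L) = ∏ i, (X - C (α i))) :
    algebraMap K L (f.eval 0) = ∏ i, -α i := by
  rw [← eval_zero_map, hroots, eval_prod]
  simp

lemma exists_sq_eq_neg_of_isSplittingField
    (hroots : f.map (algebraMap K L) = ∏ i, (X - C (α i)))
    [IsSplittingField K M (f.comp (-X ^ 2))] (i : ι) :
    ∃ s : M, s ^ 2 = algebraMap L M (-α i) := by
  have hf0 : f.map (algebraMap K M) ≠ 0 := by
    rw [Polynomial.map_ne_zero_iff (algebraMap K M).injective,
      ← Polynomial.map_ne_zero_iff (algebraMap K L).injective, hroots]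
    exact (monic_prod_X_sub_C α Finset.univ).ne_zero
  have hroot : (f.map (algebraMap K M)).IsRoot (algebraMap L M (α i)) := by
    rw [IsRoot, eval_map_algebraMap, aeval_eq_zero_iff_of_map_eq_prod hroots]
    exact ⟨i, rfl⟩
  have hsplits : ((f.map (algebraMap K M)).comp (-X ^ 2)).Splits := by
    have hcomp := IsSplittingField.splits M (f.comp (-X ^ 2))
    rwa [Polynomial.map_comp, Polynomial.map_neg, Polynomial.map_pow, map_X] at hcomp
  obtain ⟨s, hs⟩ := exists_eval_eq_of_splits_comp hf0 (by simp) hsplits hroot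
  exact ⟨s, by simp [← hs]⟩

lemma adjoin_range_eq_top_of_isSplittingField
    (hroots : f.map (algebraMap K L) = ∏ i, (X - C (α i)))
    [IsSplittingField K M (f.comp (-X ^ 2))] {s : ι → M}
    (hs : ∀ i, s i ^ 2 = algebraMap L M (-α i)) : Algebra.adjoin L (Set.range s) = ⊤ := by
  have hroot : (f.comp (-X ^ 2)).rootSet M ⊆
      (Algebra.adjoin L (Set.range s)).restrictScalars K := by
    intro x hx
    have hx0 : aeval (-x ^ 2) f = 0 := by simpa [aeval_comp] using (mem_rootSet'.mp hx).2
    obtain ⟨i, hi⟩ := (aeval_eq_zero_iff_of_map_eq_prod hroots).mp hx0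
    have hxs : x ^ 2 = s i ^ 2 := by rw [hs, map_neg, ← hi, neg_neg]
    have hsi : s i ∈ Algebra.adjoin L (Set.range s) := Algebra.subset_adjoin ⟨i, rfl⟩
    rcases sq_eq_sq_iff_eq_or_eq_neg.mp hxs with rfl | rfl
    · exact hsi
    · exact neg_mem hsi
  have htop := Algebra.adjoin_le hroot
  rw [IsSplittingField.adjoin_rootSet] at htop
  exact eq_top_iff.mpr fun x _ => htop Algebra.mem_top

theorem card_gal_comp_neg_X_sq_of_squareIndependent (h2 : (2 : K) ≠ 0)
    (hroots : f.map (algebraMap K L) = ∏ i, (X - C (α i)))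
    [IsSplittingField K L f] [IsSplittingField K M (f.comp (-X ^ 2))]
    {y : ι → Lˣ} (hyα : ∀ i, (y i : L) = -α i) (hy : SquareIndependent y) :
    Nat.card Gal(M/K) = 2 ^ Fintype.card ι * Nat.card Gal(L/K) := by
  have hf : f.Separable := separable_of_map_eq_prod hroots fun i j hij =>
    hy.injective <| Units.ext <| by rw [hyα, hyα, hij]
  have h0 : f.eval 0 ≠ 0 := by
    rw [← map_ne_zero (algebraMap K L), algebraMap_eval_zero_of_map_eq_prod hroots]
    exact Finset.prod_ne_zero_iff.mpr fun i _ => hyα i ▸ (y i).ne_zero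
  have : FiniteDimensional K L := IsSplittingField.finiteDimensional L f
  have : FiniteDimensional K M := IsSplittingField.finiteDimensional M (f.comp (-X ^ 2))
  have : IsGalois K L := .of_separable_splitting_field hf
  have : IsGalois K M := .of_separable_splitting_field (separable_comp_neg_X_sq_s9 h2 hf h0)
  have : IsGalois L M := .tower_top_of_isGalois K L M
  have h2L : (2 : L) ≠ 0 := map_ofNat (algebraMap K L) 2 ▸ (_root_.map_ne_zero _).mpr h2
  choose s hs using exists_sq_eq_neg_of_isSplittingField (M := M) hroots
  have hkummer : Nat.card Gal(M/L) = 2 ^ Fintype.card ι :=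
    card_gal_eq_two_pow h2L hy (by simpa only [hyα] using hs)
      (adjoin_range_eq_top_of_isSplittingField hroots hs)
  have : FiniteDimensional L M := .right K L M
  rw [← hkummer, IsGalois.card_aut_eq_finrank, IsGalois.card_aut_eq_finrank,
    IsGalois.card_aut_eq_finrank, mul_comm, Module.finrank_mul_finrank]

end SquareRoots

section InvariantSubspaces

open Polynomial

variable {K L ι : Type*} [Field K] [Field L] [Algebra K L]

variable (K) in
/-- Invariance of `V` under the action of `Gal(L/K)` on coordinates through the family `α`.
When `α` has repetitions, every permutation compatible with an automorphism acts. -/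
def IsGalInvariant (α : ι → L) (V : Submodule (ZMod 2) (ι → ZMod 2)) : Prop :=
  ∀ (σ : Gal(L/K)) (π : Equiv.Perm ι), (∀ i, σ (α i) = α (π i)) → ∀ v ∈ V, v ∘ π ∈ V

variable [Fintype ι] {α : ι → L}

lemma isGalInvariant_squareRelations {y : ι → Lˣ} (hyα : ∀ i, (y i : L) = -α i) :
    IsGalInvariant K α (squareRelations y) := by
  intro σ π hσ v hv
  refine comp_perm_mem_squareRelations (Units.mapEquiv σ.toMulEquiv) π (fun i => Units.ext ?_) hv
  simp [hyα, ← hσ]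

lemma squareIndependent_of_isGalInvariant_imp_isStandardSubspace {y : ι → Lˣ}
    (hyα : ∀ i, (y i : L) = -α i) (hinv : ∀ V, IsGalInvariant K α V → IsStandardSubspace V)
    {i₀ : ι} (hprod : ¬ IsSquare (∏ i, y i)) (hprod_mul : ¬ IsSquare ((∏ i, y i) * y i₀)) :
    SquareIndependent y := by
  classical
  exact squareRelations_eq_bot_iff.mp <| (hinv _ (isGalInvariant_squareRelations hyα)).eq_bot
    (one_mem_squareRelations_iff.not.mpr hprod)
    (one_add_single_mem_squareRelations_iff.not.mpr hprod_mul)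

theorem galois_group_comp_neg_X_sq_card_general {M : Type*} [Field M] [Algebra K M]
    (hchar : ringChar K ≠ 2) {f : K[X]} [IsSplittingField K L f]
    [IsSplittingField K M (f.comp (-X ^ 2))]
    (hroots : f.map (algebraMap K L) = ∏ i, (X - C (α i)))
    (hinv : ∀ V, IsGalInvariant K α V → IsStandardSubspace V) (i₀ : ι)
    (hf0 : ¬ IsSquare (algebraMap K L (f.eval 0)))
    (hf0α : ¬ IsSquare (algebraMap K L (f.eval 0) * -α i₀)) :
    Nat.card Gal(M/K) = 2 ^ Fintype.card ι * Nat.card Gal(L/K) := by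
  rw [algebraMap_eval_zero_of_map_eq_prod hroots] at hf0 hf0α
  have hprod : ∏ i, -α i ≠ 0 := fun h => hf0 (h ▸ IsSquare.zero)
  let y (i : ι) : Lˣ := .mk0 (-α i) (Finset.prod_ne_zero_iff.mp hprod i (Finset.mem_univ i))
  have hcoe : ((∏ i, y i : Lˣ) : L) = ∏ i, -α i := by simp [y]
  have hy : SquareIndependent y := by
    refine squareIndependent_of_isGalInvariant_imp_isStandardSubspace (i₀ := i₀)
      (fun _ => rfl) hinv ?_ ?_
    · rwa [← isSquare_units_val_iff, hcoe]
    · rwa [← isSquare_units_val_iff, Units.val_mul, hcoe]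
  let φ : L →ₐ[K] M := IsSplittingField.lift L f <|
    splits_map_of_isSplittingField_comp f (-X ^ 2) (by simp)
  let : Algebra L M := φ.toAlgebra
  have : IsScalarTower K L M := .of_algHom φ
  exact card_gal_comp_neg_X_sq_of_squareIndependent (Ring.two_ne_zero hchar) hroots
    (fun _ => rfl) hy

end InvariantSubspaces

/-- Let `char K ≠ 2`, `f ∈ K[T]` monic separable of degree `n` with `f(0) ≠ 0`, `L` a
splitting field of `f` over `K` with roots `αᵢ` (so `f = ∏ (T + yᵢ)` with `yᵢ = -αᵢ`).
Assume the only subspaces of `F₂ⁿ` invariant under all coordinate permutations induced by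
elements of `G = Gal(L|K)` (acting on the roots) are `0`, the span of `(1,…,1)`, the
sum-zero hyperplane and `F₂ⁿ`. If `f(0)` and `y₁` are square-independent in `L`, then the
Galois group of `f(-T²)` over `K` has order `2ⁿ·|G|`. -/
theorem galois_group_comp_neg_X_sq_card
    (K L : Type) [Field K] [Field L] [Algebra K L] (hchar : ringChar K ≠ 2)
    (n : ℕ) (hn : 0 < n) (f : Polynomial K) (hmon : f.Monic) (hsep : f.Separable)
    (hdeg : f.natDegree = n) (h0 : f.eval 0 ≠ 0)
    (hsplit : Polynomial.IsSplittingField K L f)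
    (α : Fin n → L)
    (hroots : f.map (algebraMap K L) = ∏ i : Fin n, (Polynomial.X - Polynomial.C (α i)))
    (hinv : ∀ V : Submodule (ZMod 2) (Fin n → ZMod 2),
      (∀ (σ : L ≃ₐ[K] L) (π : Equiv.Perm (Fin n)), (∀ i, σ (α i) = α (π i)) →
        ∀ v ∈ V, (fun i => v (π i)) ∈ V) →
      (V = ⊥ ∨
       V = Submodule.span (ZMod 2) {(fun _ => 1 : Fin n → ZMod 2)} ∨
       V = LinearMap.ker (∑ i : Fin n, LinearMap.proj (R := ZMod 2)
             (φ := fun _ : Fin n => ZMod 2) i) ∨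
       V = ⊤))
    (hsqindep : ∀ a b : ℕ, a ≤ 1 → b ≤ 1 →
      (∃ z : L, (algebraMap K L (f.eval 0)) ^ a * (-α ⟨0, hn⟩) ^ b = z ^ 2) →
      a = 0 ∧ b = 0) :
    ∀ (M : Type) [Field M] [Algebra K M],
      Polynomial.IsSplittingField K M (f.comp (-(Polynomial.X ^ 2))) →
      Nat.card (M ≃ₐ[K] M) = 2 ^ n * Nat.card (L ≃ₐ[K] L) := by
  intro M _ _ _
  have hf0 : ¬ IsSquare (algebraMap K L (f.eval 0)) := fun ⟨z, hz⟩ =>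
    one_ne_zero (hsqindep 1 0 le_rfl zero_le_one ⟨z, by simpa [sq] using hz⟩).1
  have hf0α : ¬ IsSquare (algebraMap K L (f.eval 0) * -α ⟨0, hn⟩) := fun ⟨z, hz⟩ =>
    one_ne_zero (hsqindep 1 1 le_rfl le_rfl ⟨z, by simpa [sq] using hz⟩).1
  simpa using galois_group_comp_neg_X_sq_card_general hchar hroots hinv ⟨0, hn⟩ hf0 hf0α
end

section
/- Let F be a field of characteristic different from 2, let n > m ≥ 2 be integers, and let f₀ ∈ F[T] be a monic polynomial of degree n. Let K = F(A₀, …, A_m) be the field of rational functions in m + 1 independent variables A₀, …, A_m over F, and set f(T) = f₀(T) + ∑_{i=0}^m Aᵢ Tⁱ ∈ K[T]. Then the Galois group of f over K is isomorphic to the symmetric group S_n, and the Galois group of f(−T²) over K has order 2ⁿ · n!. -/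
/-!
Let `α ≠ β` be roots of `f` in a splitting field, and write `α = s + v`, `β = s - v`. Dividing `f`
by `(T - s) ^ 2 - v ^ 2` expresses `A₀` and `A₁` through `s`, `A₂` and `v ^ 2`, so these three are
again independent variables, and `v` is a square root of the variable `w = v ^ 2` over
`E = F(s, A₂)`. At `w = 0` the complementary factor of `f` stays separable, so by Hensel's lemma it
splits over the power series ring in `w` over an algebraic closure of `E`, where `w` is not a
square. Hence some automorphism sends `v` to `-v` and fixes every other root: it swaps `α` and `β`.
So the Galois group of `f` contains all transpositions.

Likewise, for a root `v` of `f(-T²)`, dividing `f` by `T + v ^ 2` expresses `A₀` through `A₁`, `A₂`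
and `v ^ 2`, and the same place `v ^ 2 = 0` gives an automorphism that sends `v` to `-v` and fixes
all the other roots. These flips generate the group of sign changes, of order `2ⁿ`, which is the
kernel of the action on the roots of `f`.
-/

open Polynomial IntermediateField

/-! ### Hensel's lemma and power series -/

section Henselian

variable {R k : Type*} [CommRing R] [Field k] {φ : R →+* k} [HenselianRing R (RingHom.ker φ)]

theorem exists_isRoot_lift_of_separable (hφ : Function.Surjective φ) {p : R[X]} (hp : p.Monic)
    (hsep : (p.map φ).Separable) {α : k} (hα : (p.map φ).IsRoot α) :
    ∃ a : R, p.IsRoot a := by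
  obtain ⟨b, rfl⟩ := hφ α
  have hderiv : φ (p.derivative.eval b) ≠ 0 := by
    rw [← eval₂_at_apply, ← eval_map, ← derivative_map]
    exact hsep.eval₂_derivative_ne_zero (RingHom.id k) hα
  have hunit : IsUnit (Ideal.Quotient.mk (RingHom.ker φ) (p.derivative.eval b)) := by
    rw [← MulEquiv.isUnit_map (RingHom.quotientKerEquivOfSurjective hφ)]
    exact hderiv.isUnit
  obtain ⟨a, ha, -⟩ := HenselianRing.is_henselian p hp b
    (by rwa [RingHom.mem_ker, ← eval₂_at_apply, ← eval_map]) hunit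
  exact ⟨a, ha⟩

theorem splits_of_monic_of_separable_map [IsSepClosed k] (hφ : Function.Surjective φ) {p : R[X]}
    (hp : p.Monic) (hsep : (p.map φ).Separable) : p.Splits := by
  have := φ.domain_nontrivial
  induction hn : p.natDegree generalizing p with
  | zero => exact .of_natDegree_eq_zero hn
  | succ n ih =>
    have hdeg : (p.map φ).degree ≠ 0 := by
      rw [hp.degree_map, degree_eq_natDegree hp.ne_zero, hn]
      exact mod_cast n.succ_ne_zero
    obtain ⟨α, hα⟩ := IsSepClosed.exists_root _ hdeg hsep
    obtain ⟨a, ha⟩ := exists_isRoot_lift_of_separable hφ hp hsep hα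
    obtain ⟨q, rfl⟩ := dvd_iff_isRoot.mpr ha
    have hq : q.Monic := (monic_X_sub_C a).of_mul_monic_left hp
    rw [Polynomial.map_mul] at hsep
    refine (Splits.X_sub_C a).mul (ih hq hsep.of_mul_right ?_)
    rw [(monic_X_sub_C a).natDegree_mul hq, natDegree_X_sub_C] at hn
    omega

theorem splits_of_isUnit_leadingCoeff_of_separable_map [IsSepClosed k]
    (hφ : Function.Surjective φ) {p : R[X]} (hp : IsUnit p.leadingCoeff)
    (hsep : (p.map φ).Separable) : p.Splits := by
  obtain ⟨u, hu⟩ := hp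
  have hmonic : (C (↑u⁻¹ : R) * p).Monic :=
    monic_C_mul_of_mul_leadingCoeff_eq_one (by rw [← hu, Units.inv_mul])
  have hsep' : ((C (↑u⁻¹ : R) * p).map φ).Separable := by
    rw [Polynomial.map_mul, map_C]
    exact .unit_mul (isUnit_C.mpr (u⁻¹.isUnit.map φ)) hsep
  have hsplits := (Splits.C (u : R)).mul (splits_of_monic_of_separable_map hφ hmonic hsep')
  rwa [← mul_assoc, ← C_mul, Units.mul_inv, C_1, one_mul] at hsplits

end Henselian

theorem splits_of_separable_map_constantCoeff {k : Type*} [Field k] [IsSepClosed k]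
    {p : (PowerSeries k)[X]} (hp : IsUnit p.leadingCoeff)
    (hsep : (p.map PowerSeries.constantCoeff).Separable) : p.Splits := by
  have hker : RingHom.ker (PowerSeries.constantCoeff (R := k)) = .span {PowerSeries.X} := by
    ext x
    rw [RingHom.mem_ker, Ideal.mem_span_singleton, PowerSeries.X_dvd_iff]
  have : HenselianRing (PowerSeries k) (RingHom.ker (PowerSeries.constantCoeff (R := k))) := by
    rw [hker]
    infer_instance
  exact splits_of_isUnit_leadingCoeff_of_separable_map PowerSeries.constantCoeff_surj hp hsep

theorem not_isSquare_algebraMap {R K : Type*} [CommRing R] [IsIntegrallyClosed R]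
    [CommRing K] [Algebra R K] [IsFractionRing R K] {a : R} (ha : ¬ IsSquare a) :
    ¬ IsSquare (algebraMap R K a) := by
  rintro ⟨z, hz⟩
  obtain ⟨y, rfl⟩ := IsIntegrallyClosed.exists_algebraMap_eq_of_isIntegral_pow (R := R) (x := z)
    two_pos (by rw [sq, ← hz]; exact isIntegral_algebraMap)
  exact ha ⟨y, IsFractionRing.injective R K (by rw [hz, map_mul])⟩

section PowerSeries

variable {E : Type*} (k : Type*) [Field E] [Field k] [Algebra E k]

theorem transcendental_algebraMap_powerSeries_X :
    Transcendental E (algebraMap (PowerSeries k) (FractionRing (PowerSeries k)) PowerSeries.X) := by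
  rw [transcendental_algebraMap_iff (IsFractionRing.injective _ _), transcendental_iff_injective]
  have haeval : aeval PowerSeries.X = coeToPowerSeries.algHom (R := E) k := by ext; simp
  rw [haeval]
  intro p q hpq
  rw [coeToPowerSeries.algHom_apply, coeToPowerSeries.algHom_apply,
    ← polynomial_map_coe, ← polynomial_map_coe] at hpq
  exact Polynomial.map_injective _ (algebraMap E k).injective (coe_injective k hpq)

theorem splits_mapAlgHom_aeval_powerSeries_X [IsSepClosed k] {H : E[X][X]}
    (hH : IsUnit H.leadingCoeff) (hsep : (mapAlgHom (aeval (0 : E)) H).Separable) :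
    (mapAlgHom (aeval (PowerSeries.X : PowerSeries k)) H).Splits := by
  refine splits_of_separable_map_constantCoeff ?_ ?_
  · rw [coe_mapAlgHom, leadingCoeff_map_of_leadingCoeff_ne_zero _ (hH.map _).ne_zero]
    exact hH.map _
  · have hcomp : (PowerSeries.constantCoeff (R := k)).comp (aeval PowerSeries.X).toRingHom =
        (algebraMap E k).comp (aeval (R := E) (0 : E)).toRingHom := by
      ext <;> simp [PowerSeries.algebraMap_apply]
    have := hsep.map (f := algebraMap E k)
    rw [coe_mapAlgHom, Polynomial.map_map] at this ⊢
    exact hcomp ▸ this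

end PowerSeries

theorem exists_algHom_adjoin_simple {E N Ω : Type*} [Field E] [Field N] [Field Ω] [Algebra E N]
    [Algebra E Ω] {x : N} {y : Ω} (hx : Transcendental E x) (hy : Transcendental E y) :
    ∃ φ : E⟮x⟯ →ₐ[E] Ω, φ (AdjoinSimple.gen E x) = y := by
  refine ⟨E⟮y⟯.val.comp ((RatFunc.algEquivOfTranscendental x hx).symm.trans
    (RatFunc.algEquivOfTranscendental y hy)).toAlgHom, ?_⟩
  have hgen : AdjoinSimple.gen E x = RatFunc.algEquivOfTranscendental x hx RatFunc.X :=
    Subtype.ext (RatFunc.algEquivOfTranscendental_X x hx).symm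
  simp [hgen]

theorem map_mapAlgHom_aeval {E A B : Type*} [CommRing E] [CommRing A] [CommRing B] [Algebra E A]
    [Algebra E B] (φ : A →ₐ[E] B) (w : A) (H : E[X][X]) :
    (mapAlgHom (aeval w) H).map φ.toRingHom = mapAlgHom (aeval (φ w)) H := by
  have hcomp : φ.toRingHom.comp (aeval w).toRingHom = (aeval (R := E) (φ w)).toRingHom := by
    ext <;> simp
  rw [coe_mapAlgHom, coe_mapAlgHom, Polynomial.map_map]
  exact hcomp ▸ rfl

-- Sending `v ^ 2` to the nonsquare `y` embeds `E(v ^ 2)` into `Ω`, and the embedding extends to the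
-- adjoined roots because `H` splits over `Ω`; it cannot extend to `v`.
theorem notMem_adjoin_rootSet {E N Ω : Type*} [Field E] [Field N] [Field Ω] [Algebra E N]
    [Algebra E Ω] {v : N} {y : Ω} (hv : Transcendental E (v ^ 2))
    (hy : Transcendental E y) (hsq : ¬ IsSquare y) {H : E[X][X]}
    (hH : (mapAlgHom (aeval y) H).Splits) :
    v ∉ adjoin E⟮v ^ 2⟯ ((mapAlgHom (aeval (v ^ 2)) H).rootSet N) := by
  obtain ⟨φ, hφ⟩ := exists_algHom_adjoin_simple hv hy
  let _ := φ.toRingHom.toAlgebra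
  let w : E⟮v ^ 2⟯ := AdjoinSimple.gen E (v ^ 2)
  have hsplits : ((mapAlgHom (aeval w) H).map (algebraMap E⟮v ^ 2⟯ Ω)).Splits :=
    (map_mapAlgHom_aeval φ w H).trans (by rw [hφ]) ▸ hH
  have hmap : (mapAlgHom (aeval w) H).map (algebraMap E⟮v ^ 2⟯ N) = mapAlgHom (aeval (v ^ 2)) H :=
    map_mapAlgHom_aeval E⟮v ^ 2⟯.val w H
  have hroots (z : N) (hz : z ∈ (mapAlgHom (aeval (v ^ 2)) H).rootSet N) :
      IsIntegral E⟮v ^ 2⟯ z ∧ ((minpoly E⟮v ^ 2⟯ z).map (algebraMap E⟮v ^ 2⟯ Ω)).Splits := by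
    have hne : mapAlgHom (aeval w) H ≠ 0 := by
      intro h
      simp [← hmap, h] at hz
    have hz0 : aeval z (mapAlgHom (aeval w) H) = 0 := by
      rw [← aeval_map_algebraMap N, hmap]
      exact (mem_rootSet.mp hz).2
    exact ⟨IsAlgebraic.isIntegral ⟨_, hne, hz0⟩,
      hsplits.of_dvd (Polynomial.map_ne_zero hne) (Polynomial.map_dvd _ (minpoly.dvd _ _ hz0))⟩
  obtain ⟨ψ⟩ := nonempty_algHom_adjoin_of_splits hroots
  intro hmem
  let v' : adjoin E⟮v ^ 2⟯ ((mapAlgHom (aeval (v ^ 2)) H).rootSet N) := ⟨v, hmem⟩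
  refine hsq ⟨ψ v', ?_⟩
  have hw : algebraMap E⟮v ^ 2⟯ _ w = v' * v' := Subtype.ext (sq v)
  rw [← map_mul, ← hw, ψ.commutes, ← hφ]
  rfl

theorem exists_fixing_of_notMem {L N : Type*} [Field L] [Field N] [Algebra L N] [IsGalois L N]
    {M : IntermediateField L N} {v : N} (hv : v ∉ M) : ∃ τ ∈ M.fixingSubgroup, τ v ≠ v := by
  rw [← InfiniteGalois.fixedField_fixingSubgroup M] at hv
  simpa [mem_fixedField_iff] using hv

theorem exists_algEquiv_apply_eq_neg {K E N : Type*} [Field K] [Field E] [Field N] [Algebra K N]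
    [Algebra E N] [IsGalois K N] {v : N} (hv : Transcendental E v)
    (hK : ∀ x : K, algebraMap K N x ∈ E⟮v ^ 2⟯) {H : E[X][X]} (hH : IsUnit H.leadingCoeff)
    (hsep : (mapAlgHom (aeval (0 : E)) H).Separable) :
    ∃ τ : N ≃ₐ[K] N, τ v = -v ∧ (∀ e : E, τ (algebraMap E N e) = algebraMap E N e) ∧
      ∀ z, (mapAlgHom (aeval (v ^ 2)) H).IsRoot z → τ z = z := by
  let _ : Algebra K E⟮v ^ 2⟯ := ((algebraMap K N).codRestrict E⟮v ^ 2⟯ hK).toAlgebra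
  have : IsScalarTower K E⟮v ^ 2⟯ N := .of_algebraMap_eq fun _ ↦ rfl
  have : IsGalois E⟮v ^ 2⟯ N := .tower_top_of_isGalois K _ N
  let S := PowerSeries (AlgebraicClosure E)
  have hsplits := (splits_mapAlgHom_aeval_powerSeries_X (AlgebraicClosure E) hH hsep).map
    (IsScalarTower.toAlgHom E S (FractionRing S)).toRingHom
  rw [map_mapAlgHom_aeval] at hsplits
  obtain ⟨τ, hτ, hτv⟩ := exists_fixing_of_notMem <| notMem_adjoin_rootSet (hv.pow two_pos)
    (transcendental_algebraMap_powerSeries_X (AlgebraicClosure E))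
    (not_isSquare_algebraMap PowerSeries.X_prime.not_isSquare) hsplits
  have hlc := (hH.map (aeval (v ^ 2))).ne_zero
  have hH₀ : mapAlgHom (aeval (v ^ 2)) H ≠ 0 := fun h ↦ hlc <| by
    simpa using congrArg (coeff · H.natDegree) h
  refine ⟨τ.restrictScalars K, ?_, fun e ↦ τ.commutes (algebraMap E _ e), fun z hz ↦
    hτ ⟨z, subset_adjoin _ _ (mem_rootSet.mpr ⟨hH₀, by simpa using hz⟩)⟩⟩
  have hsq : τ v ^ 2 = v ^ 2 := by
    rw [← map_pow]
    exact τ.commutes (AdjoinSimple.gen E (v ^ 2))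
  exact (sq_eq_sq_iff_eq_or_eq_neg.mp hsq).resolve_left hτv

/-! ### Separability and transcendence -/

-- A root `z` common with the derivative is algebraic over `k`, hence so is `c = -g(z)`.
theorem separable_map_add_C_of_transcendental {k E : Type*} [Field k] [Field E] [Algebra k E]
    {c : E} (hc : Transcendental k c) {g : k[X]} (hg : derivative g ≠ 0) :
    (g.map (algebraMap k E) + C c).Separable := by
  rw [Polynomial.Separable, isCoprime_iff_aeval_ne_zero_of_isAlgClosed E (AlgebraicClosure E)]
  by_contra! ⟨z, hz, hz'⟩
  rw [derivative_add, derivative_C, add_zero, derivative_map, aeval_map_algebraMap] at hz'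
  have hcz : algebraMap E (AlgebraicClosure E) c = -aeval z g := by
    rw [map_add, aeval_map_algebraMap, aeval_C] at hz
    exact eq_neg_of_add_eq_zero_right hz
  have halg : IsAlgebraic k (aeval z g) :=
    not_not.mp fun h ↦ (transcendental_aeval_iff.mp h).1 ⟨_, hg, hz'⟩
  exact hc ((isAlgebraic_algebraMap_iff (algebraMap E _).injective).mp (hcz ▸ halg.neg))

section Transcendence

variable {F K N ι : Type*} [Field F] [Field K] [Field N] [Algebra F K] [Algebra K N] [Algebra F N]
  [IsScalarTower F K N]

theorem algebraMap_mem_of_adjoin_eq_top {s : Set K} (hs : IntermediateField.adjoin F s = ⊤)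
    {M : IntermediateField F N} (hM : ∀ x ∈ s, algebraMap K N x ∈ M) (z : K) :
    algebraMap K N z ∈ M := by
  have hle : IntermediateField.adjoin F s ≤ M.comap (IsScalarTower.toAlgHom F K N) :=
    adjoin_le_iff.mpr hM
  exact hle (hs ▸ mem_top)

theorem algebraicIndependent_of_algebraMap_mem_adjoin [Finite ι] [Algebra.IsAlgebraic K N]
    {x : ι → K} (hx : AlgebraicIndependent F x) (hs : IntermediateField.adjoin F (Set.range x) = ⊤)
    {y : ι → N} (hy : ∀ i, algebraMap K N (x i) ∈ IntermediateField.adjoin F (Set.range y)) :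
    AlgebraicIndependent F y := by
  have hK := algebraMap_mem_of_adjoin_eq_top hs (Set.forall_mem_range.mpr hy)
  let _ : Algebra K (IntermediateField.adjoin F (Set.range y)) :=
    ((algebraMap K N).codRestrict _ hK).toAlgebra
  have : IsScalarTower K (IntermediateField.adjoin F (Set.range y)) N :=
    .of_algebraMap_eq fun _ ↦ rfl
  have := isAlgebraic_adjoin_iff_top.mp <|
    Algebra.IsAlgebraic.tower_top (K := K) (IntermediateField.adjoin F (Set.range y)) (A := N)
  have hx' : AlgebraicIndependent F (algebraMap K N ∘ x) :=
    hx.map' (f := IsScalarTower.toAlgHom F K N) (algebraMap K N).injective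
  have hbasis := Algebra.IsAlgebraic.isTranscendenceBasis_of_lift_le_trdeg_of_finite F y
    hx'.lift_cardinalMk_le_trdeg
  exact hbasis.1

theorem algebraicIndependent_comp_adjoin_image {κ : Type*} {x : ι → N}
    (hx : AlgebraicIndependent F x) {s : Set ι} {g : κ → ι} (hg : Function.Injective g)
    (hs : ∀ j, g j ∉ s) : AlgebraicIndependent (IntermediateField.adjoin F (x '' s)) (x ∘ g) := by
  rw [algebraicIndependent_adjoin_iff]
  exact (hx.adjoin_of_disjoint disjoint_compl_right).comp (fun j ↦ ⟨g j, hs j⟩)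
    fun i j h ↦ hg (congrArg Subtype.val h)

theorem transcendental_adjoin_simple_tower {p q r : N} (h : AlgebraicIndependent F ![p, q, r]) :
    Transcendental F p ∧ Transcendental F⟮p⟯ q ∧ Transcendental F⟮p⟯⟮q⟯ r := by
  have h₁ := algebraicIndependent_comp_adjoin_image h (s := {0}) (Fin.succ_injective _)
    Fin.succ_ne_zero
  rw [Set.image_singleton] at h₁
  have h₂ := algebraicIndependent_comp_adjoin_image h₁ (s := {0}) (Fin.succ_injective _)
    Fin.succ_ne_zero
  rw [Set.image_singleton] at h₂
  exact ⟨h.transcendental 0, h₁.transcendental 0, h₂.transcendental 0⟩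

end Transcendence

theorem two_ne_zero_of_algebra {F N : Type*} [Field F] [Field N] [Algebra F N]
    (h : (2 : F) ≠ 0) : (2 : N) ≠ 0 := by
  rw [← map_ofNat (algebraMap F N) 2]
  exact (_root_.map_ne_zero _).mpr h

/-! ### The cofactor of a factor -/

section Cofactor

variable {E N : Type*} [Field E] [Field N] [Algebra E N]

theorem coeff_mapAlgHom_aeval_mem_adjoin_simple (w : N) (G : E[X][X]) (i : ℕ) :
    (mapAlgHom (aeval w) G).coeff i ∈ E⟮w⟯ := by
  rw [coe_mapAlgHom, coeff_map]
  exact algebra_adjoin_le_adjoin E {w} (aeval_mem_adjoin_singleton E w)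

theorem mapAlgHom_aeval_divByMonic (w : N) (g : E[X]) {Q : E[X][X]} (hQ : Q.Monic) :
    mapAlgHom (aeval w) (g.map C /ₘ Q) = g.map (algebraMap E N) /ₘ mapAlgHom (aeval w) Q := by
  have hcomp : (aeval w).toRingHom.comp C = algebraMap E N := by ext; simp
  rw [coe_mapAlgHom, map_divByMonic _ hQ, Polynomial.map_map, ← hcomp]
  rfl

theorem mapAlgHom_aeval_zero_divByMonic (g : E[X]) {Q : E[X][X]} (hQ : Q.Monic) :
    mapAlgHom (aeval (0 : E)) (g.map C /ₘ Q) = g /ₘ mapAlgHom (aeval 0) Q := by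
  rw [mapAlgHom_aeval_divByMonic 0 g hQ, Algebra.algebraMap_self, Polynomial.map_id]

theorem isUnit_leadingCoeff_map_C_divByMonic {g : E[X]} {Q : E[X][X]} (hQ : Q.Monic)
    (hdeg : Q.degree ≤ g.degree) : IsUnit (g.map C /ₘ Q).leadingCoeff := by
  have hg : g ≠ 0 := by
    rintro rfl
    exact hQ.ne_zero (degree_eq_bot.mp (le_bot_iff.mp hdeg))
  rw [leadingCoeff_divByMonic_of_monic hQ (by rwa [degree_map_eq_of_injective C_injective]),
    leadingCoeff_map_of_injective C_injective]
  exact isUnit_C.mpr (leadingCoeff_ne_zero.mpr hg).isUnit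

theorem map_add_eq_mul_cofactor {w : N} {g : E[X]} {r : N[X]} {Q : E[X][X]} (hQ : Q.Monic)
    (hr : r.degree < Q.degree)
    (hdvd : mapAlgHom (aeval w) Q ∣ g.map (algebraMap E N) + r) :
    g.map (algebraMap E N) + r = mapAlgHom (aeval w) Q * mapAlgHom (aeval w) (g.map C /ₘ Q) ∧
      ∀ i, r.coeff i ∈ E⟮w⟯ := by
  obtain ⟨q, hq⟩ := hdvd
  have hQ' : (mapAlgHom (aeval w) Q).Monic := hQ.map _
  have hcomp : (aeval w).toRingHom.comp C = algebraMap E N := by ext; simp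
  obtain ⟨hq', hr'⟩ := div_modByMonic_unique q (-r) hQ' (f := g.map (algebraMap E N))
    ⟨by rw [← hq]; ring, by rwa [degree_neg, coe_mapAlgHom, hQ.degree_map]⟩
  refine ⟨by rw [mapAlgHom_aeval_divByMonic w g hQ, hq', hq], fun i ↦ ?_⟩
  rw [← neg_neg r, ← hr', coeff_neg, ← hcomp, ← Polynomial.map_map]
  refine neg_mem ?_
  have := coeff_mapAlgHom_aeval_mem_adjoin_simple w (g.map C %ₘ Q) i
  rwa [coe_mapAlgHom, map_modByMonic _ hQ] at this

end Cofactor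

-- If `q' = 0`, then `f' = 2 (T - s) q + u` and `f'' = 2 q`, so `s f'' = T f'' - f' + u`. Comparing
-- leading coefficients exhibits `s` as an element of `F`.
theorem derivative_ne_zero_of_map_eq_sq_mul_add {F k : Type*} [Field F] [Field k] [Algebra F k]
    (h2 : (2 : F) ≠ 0) {f : F[X]} {s u w : k} (hs : Transcendental F s) {q : k[X]}
    (hf : f.map (algebraMap F k) = (X - C s) ^ 2 * q + (C u * X + C w)) (hq : q.natDegree ≠ 0) :
    derivative q ≠ 0 := by
  intro hq'
  have h2' : (2 : k) ≠ 0 := two_ne_zero_of_algebra h2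
  have hd₁ : (derivative f).map (algebraMap F k) = C 2 * (X - C s) * q + C u := by
    rw [← derivative_map, hf]
    simp [hq', derivative_pow]
  have hd₂ : (derivative (derivative f)).map (algebraMap F k) = C 2 * q := by
    rw [← derivative_map, hd₁]
    simp [hq']
  have hlin : C s * (derivative (derivative f)).map (algebraMap F k) =
      X * (derivative (derivative f)).map (algebraMap F k) -
        (derivative f).map (algebraMap F k) + C u := by
    rw [hd₁, hd₂]
    ring
  obtain ⟨j, hj⟩ := Nat.exists_eq_succ_of_ne_zero hq
  have hlead : algebraMap F k ((derivative (derivative f)).coeff (j + 1)) ≠ 0 := by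
    rw [← coeff_map, hd₂, coeff_C_mul, ← Nat.succ_eq_add_one, ← hj]
    exact mul_ne_zero h2' (leadingCoeff_ne_zero.mpr (ne_zero_of_natDegree_gt (hj ▸ j.succ_pos)))
  have hcoeff := congrArg (coeff · (j + 1)) hlin
  simp only [coeff_C_mul, coeff_sub, coeff_add, coeff_X_mul, coeff_map, coeff_C_succ, add_zero,
    ← map_sub] at hcoeff
  have hs' := eq_div_of_mul_eq hlead hcoeff
  exact hs (hs' ▸ map_div₀ (algebraMap F k) _ _ ▸ isAlgebraic_algebraMap _)

theorem derivative_divByMonic_sq_ne_zero {F k : Type*} [Field F] [Field k] [Algebra F k]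
    (h2 : (2 : F) ≠ 0) {f : F[X]} (hf : 3 ≤ f.natDegree) {s : k} (hs : Transcendental F s) :
    derivative (f.map (algebraMap F k) /ₘ (X - C s) ^ 2) ≠ 0 := by
  have hmonic : ((X - C s) ^ 2).Monic := (monic_X_sub_C s).pow 2
  have hdeg : ((X - C s) ^ 2).natDegree = 2 := by simp
  have hne : (X - C s) ^ 2 ≠ 1 := fun h ↦ by simp [h] at hdeg
  have hlt := natDegree_modByMonic_lt (f.map (algebraMap F k)) hmonic hne
  obtain ⟨u, w, hr⟩ := exists_eq_X_add_C_of_natDegree_le_one (Nat.lt_succ_iff.mp (hdeg ▸ hlt))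
  refine derivative_ne_zero_of_map_eq_sq_mul_add h2 (f := f) (u := u) (w := w) hs ?_ ?_
  · rw [← hr, add_comm, modByMonic_add_div]
  · rw [natDegree_divByMonic _ hmonic, natDegree_map, hdeg]
    omega

theorem comp_neg_X_sq_ne_zero {k : Type*} [Field k] {g : k[X]} (hg : g ≠ 0) :
    g.comp (-X ^ 2) ≠ 0 := by
  rw [Ne, comp_eq_zero_iff, not_or]
  exact ⟨hg, fun h ↦ by simpa using congrArg (coeff · 2) h.2⟩

section Separable

variable {F k E : Type*} [Field F] [Field k] [Field E] [Algebra F k] [Algebra k E] [Algebra F E]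
  [IsScalarTower F k E] {f₀ : F[X]}

theorem separable_divByMonic_sq (h2 : (2 : F) ≠ 0) (hf₀ : 3 ≤ f₀.natDegree) {s : k} {c : E}
    (hs : Transcendental F s) (hc : Transcendental k c) :
    ((f₀.map (algebraMap F E) + C c * X ^ 2) /ₘ (X - C (algebraMap k E s)) ^ 2).Separable := by
  set g := f₀.map (algebraMap F k)
  set Q := (X - C s) ^ 2
  have hQ : Q.Monic := (monic_X_sub_C s).pow 2
  have hQmap : Q.map (algebraMap k E) = (X - C (algebraMap k E s)) ^ 2 := by simp [Q]
  have hQdeg : (Q.map (algebraMap k E)).degree = 2 := by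
    rw [hQmap, degree_pow, degree_X_sub_C]
    rfl
  have hdiv : (f₀.map (algebraMap F E) + C c * X ^ 2) /ₘ (X - C (algebraMap k E s)) ^ 2 =
      (g /ₘ Q).map (algebraMap k E) + C c := by
    rw [← hQmap]
    refine (div_modByMonic_unique _ ((g %ₘ Q).map (algebraMap k E) +
      (C (2 * c * algebraMap k E s) * X + C (-c * algebraMap k E s ^ 2))) (hQ.map _) ⟨?_, ?_⟩).1
    · have h := congrArg (map (algebraMap k E)) (modByMonic_add_div g Q)
      rw [Polynomial.map_map, ← IsScalarTower.algebraMap_eq, Polynomial.map_add,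
        Polynomial.map_mul] at h
      rw [← h, hQmap]
      simp only [C_mul, C_pow, C_neg, C_ofNat]
      ring
    · refine (degree_add_le _ _).trans_lt (max_lt ?_ ?_)
      · rw [map_modByMonic _ hQ]
        exact degree_modByMonic_lt _ (hQ.map _)
      · exact degree_linear_le.trans_lt (by rw [hQdeg]; exact Nat.one_lt_ofNat)
  rw [hdiv]
  exact separable_map_add_C_of_transcendental hc (derivative_divByMonic_sq_ne_zero h2 hf₀ hs)

theorem separable_comp_neg_sq_divX (h2 : (2 : F) ≠ 0) {c : k} {b : E} (hc : Transcendental F c)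
    (hb : Transcendental k b) :
    (((f₀.map (algebraMap F E) + C (algebraMap k E c) * X ^ 2 + C b * X) /ₘ X).comp
      (-X ^ 2)).Separable := by
  set g := divX (f₀.map (algebraMap F k)) + C c * X
  have hdiv : (f₀.map (algebraMap F E) + C (algebraMap k E c) * X ^ 2 + C b * X) /ₘ X =
      g.map (algebraMap k E) + C b := by
    refine (div_modByMonic_unique _ (C (algebraMap F E (f₀.coeff 0))) monic_X ⟨?_, ?_⟩).1
    · have := congrArg (map (algebraMap k E)) (X_mul_divX_add (f₀.map (algebraMap F k)))
      simp only [g, Polynomial.map_add, Polynomial.map_mul, map_X, map_C, coeff_map,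
        Polynomial.map_map, ← IsScalarTower.algebraMap_eq, ← IsScalarTower.algebraMap_apply]
        at this ⊢
      linear_combination this
    · exact degree_C_le.trans_lt (by simp)
  have hmap : (-X ^ 2 : E[X]) = (-X ^ 2 : k[X]).map (algebraMap k E) := by simp
  rw [hdiv, add_comp, C_comp, hmap, ← map_comp]
  refine separable_map_add_C_of_transcendental hb ?_
  have hg : derivative g ≠ 0 := by
    intro h
    have h₁ : algebraMap F k (f₀.coeff 2) + c = 0 := by
      simpa [g, coeff_derivative, coeff_divX] using congrArg (coeff · 0) h
    exact hc (eq_neg_of_add_eq_zero_right h₁ ▸ (isAlgebraic_algebraMap _).neg)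
  have h2' : (2 : k) ≠ 0 := two_ne_zero_of_algebra h2
  rw [derivative_comp]
  have hX : derivative (-X ^ 2 : k[X]) ≠ 0 := by
    rw [derivative_neg, derivative_X_sq, neg_ne_zero]
    exact mul_ne_zero (C_ne_zero.mpr h2') X_ne_zero
  exact mul_ne_zero hX (comp_neg_X_sq_ne_zero hg)

end Separable

/-! ### Rational function fields -/

/-- `K` is the field of rational functions over `F` in the independent variables `x`. Naming the
variables, rather than a presentation of `K` as a fraction field, lets the base field change. -/
structure IsRationalFunctionField (F : Type*) {K ι : Type*} [Field F] [Field K] [Algebra F K]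
    (x : ι → K) : Prop where
  algebraicIndependent : AlgebraicIndependent F x
  adjoin_eq_top : IntermediateField.adjoin F (Set.range x) = ⊤

section RationalFunctionField

variable {F K N ι : Type*} [Field F] [Field K] [Field N] [Algebra F K] [Algebra K N] [Algebra F N]
  [IsScalarTower F K N]

theorem IsRationalFunctionField.transcendental_tower [Algebra.IsAlgebraic K N] {x : Fin 3 → K}
    (hx : IsRationalFunctionField F x) {p q v : N}
    (hmem : ∀ i, algebraMap K N (x i) ∈ F⟮p⟯⟮q⟯⟮v ^ 2⟯) :
    Transcendental F p ∧ Transcendental F⟮p⟯ q ∧ Transcendental F⟮p⟯⟮q⟯ v := by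
  refine transcendental_adjoin_simple_tower <|
    algebraicIndependent_of_algebraMap_mem_adjoin hx.1 hx.2 fun i ↦ ?_
  have hle : F⟮p⟯⟮q⟯⟮v ^ 2⟯ ≤ F⟮p⟯⟮q⟯⟮v⟯ :=
    adjoin_simple_le_iff.mpr (pow_mem (mem_adjoin_simple_self _ v) 2)
  have hrange : Set.range ![p, q, v] = {p} ∪ ({q} ∪ {v}) := by
    simp only [Matrix.range_cons, Matrix.range_empty, Set.union_empty]
  rw [hrange, ← adjoin_adjoin_left, mem_restrictScalars, ← adjoin_adjoin_left]
  exact hle (hmem i)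

theorem IsRationalFunctionField.algebraMap_mem {x : ι → K} (hx : IsRationalFunctionField F x)
    {p q w : N} (hmem : ∀ i, algebraMap K N (x i) ∈ F⟮p⟯⟮q⟯⟮w⟯) (z : K) :
    algebraMap K N z ∈ F⟮p⟯⟮q⟯⟮w⟯ :=
  algebraMap_mem_of_adjoin_eq_top hx.2
    (M := (F⟮p⟯⟮q⟯⟮w⟯.restrictScalars F⟮p⟯).restrictScalars F) (Set.forall_mem_range.mpr hmem) z

/-- The polynomial `f₀ + x₀ + x₁ T + ⋯ + x_{m-1} T ^ (m - 1)`: for algebraically independent `x`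
this is the generic polynomial obtained from `f₀` by moving its `m` lowest coefficients. -/
noncomputable def perturbation {m : ℕ} (f₀ : F[X]) (x : Fin m → K) : K[X] :=
  f₀.map (algebraMap F K) + ∑ i : Fin m, C (x i) * X ^ (i : ℕ)

theorem map_perturbation {m : ℕ} (f₀ : F[X]) (x : Fin m → K) :
    (perturbation f₀ x).map (algebraMap K N) = perturbation f₀ (algebraMap K N ∘ x) := by
  simp [perturbation, Polynomial.map_sum, Polynomial.map_map, ← IsScalarTower.algebraMap_eq]

end RationalFunctionField

/-- The quadratic polynomial `(T - s) ^ 2 - w` over `E[w]`, with roots `s ± v` at `w = v ^ 2`. Both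
variables are called `X`, the inner one being `w`. -/
noncomputable def quadraticFactor {E : Type*} [Field E] (s : E) : E[X][X] :=
  (X - C (C s)) ^ 2 - C X

section QuadraticFactor

variable {E N : Type*} [Field E] [Field N] [Algebra E N] (s : E)

theorem degree_C_lt_degree_X_sub_C_sq :
    (C X : E[X][X]).degree < ((X - C (C s)) ^ 2 : E[X][X]).degree := by
  rw [degree_pow, degree_X_sub_C]
  exact degree_C_le.trans_lt (by norm_num)

theorem monic_quadraticFactor : (quadraticFactor s).Monic :=
  ((monic_X_sub_C _).pow 2).sub_of_left (degree_C_lt_degree_X_sub_C_sq s)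

theorem degree_quadraticFactor : (quadraticFactor s).degree = 2 := by
  rw [quadraticFactor, degree_sub_eq_left_of_degree_lt (degree_C_lt_degree_X_sub_C_sq s),
    degree_pow, degree_X_sub_C]
  rfl

theorem mapAlgHom_aeval_quadraticFactor (w : N) :
    mapAlgHom (aeval w) (quadraticFactor s) = (X - C (algebraMap E N s)) ^ 2 - C w := by
  simp [quadraticFactor]

end QuadraticFactor

/-! ### Swaps and flips -/

theorem quadratic_dvd_of_isRoot {N : Type*} [Field N] {p : N[X]} {s v : N} (h2 : (2 : N) ≠ 0)
    (hv : v ≠ 0) (hadd : p.IsRoot (s + v)) (hsub : p.IsRoot (s - v)) :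
    (X - C s) ^ 2 - C (v ^ 2) ∣ p := by
  have hsplit : (X - C s) ^ 2 - C (v ^ 2) = (X - C (s + v)) * (X - C (s - v)) := by
    simp only [C_add, C_sub, C_pow]
    ring
  rw [hsplit]
  refine IsCoprime.mul_dvd (isCoprime_X_sub_C_of_isUnit_sub ?_) (dvd_iff_isRoot.mpr hadd)
    (dvd_iff_isRoot.mpr hsub)
  rw [add_sub_sub_cancel, ← two_mul]
  exact (mul_ne_zero h2 hv).isUnit

section Swap

variable {F E N : Type*} [Field F] [Field E] [Field N] [Algebra F E] [Algebra E N] {f₀ : F[X]}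

theorem map_add_eq_quadratic_mul_cofactor {g : E[X]} {s : E} {a b v : N} (h2 : (2 : N) ≠ 0)
    (hv : v ≠ 0)
    (hadd : (g.map (algebraMap E N) + (C b * X + C a)).IsRoot (algebraMap E N s + v))
    (hsub : (g.map (algebraMap E N) + (C b * X + C a)).IsRoot (algebraMap E N s - v)) :
    g.map (algebraMap E N) + (C b * X + C a) = ((X - C (algebraMap E N s)) ^ 2 - C (v ^ 2)) *
        mapAlgHom (aeval (v ^ 2)) (g.map C /ₘ quadraticFactor s) ∧
      ∀ i, (C b * X + C a).coeff i ∈ E⟮v ^ 2⟯ := by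
  rw [← mapAlgHom_aeval_quadraticFactor]
  refine map_add_eq_mul_cofactor (monic_quadraticFactor s) (degree_linear_le.trans_lt ?_) ?_
  · rw [degree_quadraticFactor]
    exact Nat.one_lt_ofNat
  · rw [mapAlgHom_aeval_quadraticFactor]
    exact quadratic_dvd_of_isRoot h2 hv hadd hsub

theorem degree_map_add_C_mul_X_sq (hf₀ : 3 ≤ f₀.natDegree) (c : E) :
    (f₀.map (algebraMap F E) + C c * X ^ 2).degree = (f₀.natDegree : WithBot ℕ) := by
  have hf : f₀.degree = f₀.natDegree := degree_eq_natDegree (ne_zero_of_natDegree_gt hf₀)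
  rw [degree_add_eq_left_of_degree_lt, degree_map, hf]
  rw [degree_map, hf]
  exact (degree_C_mul_X_pow_le 2 c).trans_lt (mod_cast hf₀)

theorem exists_algEquiv_swap_of_transcendental {k K : Type*} [Field k] [Field K] [Algebra F k]
    [Algebra k E] [IsScalarTower F k E] [Algebra K N] [IsGalois K N] (h2 : (2 : F) ≠ 0)
    (hf₀ : 3 ≤ f₀.natDegree) {s : k} {c : E} {v a b : N} (hs : Transcendental F s)
    (hc : Transcendental k c) (hv : Transcendental E v)
    (hK : ∀ z, algebraMap K N z ∈ E⟮v ^ 2⟯) {p : N[X]}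
    (hp : p = (f₀.map (algebraMap F E) + C c * X ^ 2).map (algebraMap E N) + (C b * X + C a))
    (hadd : p.IsRoot (algebraMap E N (algebraMap k E s) + v))
    (hsub : p.IsRoot (algebraMap E N (algebraMap k E s) - v)) :
    ∃ τ : N ≃ₐ[K] N, τ v = -v ∧ (∀ e : E, τ (algebraMap E N e) = algebraMap E N e) ∧
      ∀ z, p.IsRoot z → z ≠ algebraMap E N (algebraMap k E s) + v →
        z ≠ algebraMap E N (algebraMap k E s) - v → τ z = z := by
  subst hp
  have h2N : (2 : N) ≠ 0 := two_ne_zero_of_algebra (two_ne_zero_of_algebra h2 : (2 : E) ≠ 0)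
  have hv₀ : v ≠ 0 := fun h ↦ hv (h ▸ isAlgebraic_zero)
  have hQ := monic_quadraticFactor (algebraMap k E s)
  have hsep : (mapAlgHom (aeval (0 : E)) ((f₀.map (algebraMap F E) + C c * X ^ 2).map C /ₘ
      quadraticFactor (algebraMap k E s))).Separable := by
    rw [mapAlgHom_aeval_zero_divByMonic _ hQ, mapAlgHom_aeval_quadraticFactor, C_0, sub_zero,
      Algebra.algebraMap_self_apply]
    exact separable_divByMonic_sq h2 hf₀ hs hc
  have hdeg : (quadraticFactor (algebraMap k E s)).degree ≤
      (f₀.map (algebraMap F E) + C c * X ^ 2).degree := by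
    rw [degree_quadraticFactor, degree_map_add_C_mul_X_sq hf₀]
    exact mod_cast Nat.le_of_succ_le hf₀
  obtain ⟨τ, hτv, hτE, hτ⟩ := exists_algEquiv_apply_eq_neg hv hK
    (isUnit_leadingCoeff_map_C_divByMonic hQ hdeg) hsep
  refine ⟨τ, hτv, hτE, fun z hz hadd' hsub' ↦ hτ z ?_⟩
  rw [(map_add_eq_quadratic_mul_cofactor h2N hv₀ hadd hsub).1, IsRoot, eval_mul] at hz
  refine (mul_eq_zero.mp hz).resolve_left fun h ↦ ?_
  simp only [eval_sub, eval_pow, eval_X, eval_C, sub_eq_zero] at h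
  rcases sq_eq_sq_iff_eq_or_eq_neg.mp h with h | h
  · exact hadd' (eq_add_of_sub_eq' h)
  · exact hsub' (by linear_combination h)

end Swap

section Flip

variable {F E N : Type*} [Field F] [Field E] [Field N] [Algebra F E] [Algebra E N] {f₀ : F[X]}

theorem map_add_eq_linear_mul_cofactor {g : E[X]} {a w : N}
    (hroot : (g.map (algebraMap E N) + C a).IsRoot (-w)) :
    g.map (algebraMap E N) + C a =
        (X + C w) * mapAlgHom (aeval w) (g.map C /ₘ (X + C X)) ∧ a ∈ E⟮w⟯ := by
  have hQ : mapAlgHom (aeval w) (X + C X : E[X][X]) = X + C w := by simp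
  obtain ⟨hprod, hcoeff⟩ := map_add_eq_mul_cofactor (w := w) (g := g) (r := C a)
    (monic_X_add_C (X : E[X])) (degree_C_le.trans_lt (by rw [degree_X_add_C]; exact zero_lt_one))
    (by rw [hQ, ← sub_neg_eq_add, ← C_neg]; exact dvd_iff_isRoot.mpr hroot)
  exact ⟨hQ ▸ hprod, by simpa using hcoeff 0⟩

theorem mapAlgHom_aeval_comp_neg_sq (w : N) (H : E[X][X]) :
    mapAlgHom (aeval w) (H.comp (-X ^ 2)) = (mapAlgHom (aeval w) H).comp (-X ^ 2) := by
  simp [coe_mapAlgHom, Polynomial.map_comp]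

theorem isUnit_leadingCoeff_comp_neg_sq {R : Type*} [CommRing R] [IsDomain R] {p : R[X]}
    (hp : IsUnit p.leadingCoeff) : IsUnit (p.comp (-X ^ 2)).leadingCoeff := by
  rw [leadingCoeff_comp (by simp), leadingCoeff_neg, leadingCoeff_X_pow]
  exact hp.mul (isUnit_one.neg.pow _)

theorem exists_algEquiv_flip_of_transcendental {k K : Type*} [Field k] [Field K] [Algebra F k]
    [Algebra k E] [IsScalarTower F k E] [Algebra K N] [IsGalois K N] (h2 : (2 : F) ≠ 0)
    (hf₀ : 3 ≤ f₀.natDegree) {c : k} {b : E} {v a : N} (hc : Transcendental F c)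
    (hb : Transcendental k b) (hv : Transcendental E v)
    (hK : ∀ z, algebraMap K N z ∈ E⟮v ^ 2⟯) {p : N[X]}
    (hp : p = (f₀.map (algebraMap F E) + C (algebraMap k E c) * X ^ 2 + C b * X).map
      (algebraMap E N) + C a) (hroot : p.IsRoot (-v ^ 2)) :
    ∃ τ : N ≃ₐ[K] N, τ v = -v ∧ ∀ z, p.IsRoot (-z ^ 2) → z ^ 2 ≠ v ^ 2 → τ z = z := by
  subst hp
  set g := f₀.map (algebraMap F E) + C (algebraMap k E c) * X ^ 2 + C b * X with hg
  have hQ : (X + C X : E[X][X]).Monic := monic_X_add_C X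
  have hsep : (mapAlgHom (aeval (0 : E)) ((g.map C /ₘ (X + C X)).comp (-X ^ 2))).Separable := by
    have hQ₀ : mapAlgHom (aeval (0 : E)) (X + C X : E[X][X]) = X := by simp
    rw [mapAlgHom_aeval_comp_neg_sq, mapAlgHom_aeval_zero_divByMonic _ hQ, hQ₀]
    exact separable_comp_neg_sq_divX h2 hc hb
  have hdeg : (X + C X : E[X][X]).degree ≤ g.degree := by
    have hlt : (C b * X).degree <
        (f₀.map (algebraMap F E) + C (algebraMap k E c) * X ^ 2).degree := by
      rw [degree_map_add_C_mul_X_sq hf₀]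
      exact (degree_C_mul_X_le b).trans_lt (mod_cast Nat.lt_of_succ_lt hf₀)
    rw [degree_X_add_C, hg, degree_add_eq_left_of_degree_lt hlt, degree_map_add_C_mul_X_sq hf₀]
    exact mod_cast Nat.one_le_of_lt hf₀
  obtain ⟨τ, hτv, -, hτ⟩ := exists_algEquiv_apply_eq_neg hv hK (isUnit_leadingCoeff_comp_neg_sq
    (isUnit_leadingCoeff_map_C_divByMonic hQ hdeg)) hsep
  refine ⟨τ, hτv, fun z hz hzv ↦ hτ z ?_⟩
  have heval := congrArg (eval (-z ^ 2)) (map_add_eq_linear_mul_cofactor hroot).1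
  rw [hz.eq_zero, eval_mul, eval_add, eval_X, eval_C, neg_add_eq_sub] at heval
  rw [mapAlgHom_aeval_comp_neg_sq, IsRoot, eval_comp, eval_neg, eval_pow, eval_X]
  exact (mul_eq_zero.mp heval.symm).resolve_left (sub_ne_zero.mpr hzv.symm)

end Flip

section RationalFunctionField

variable {F K N : Type*} [Field F] [Field K] [Field N] [Algebra F K] [Algebra K N] [Algebra F N]
  [IsScalarTower F K N] {f₀ : F[X]} {x : Fin 3 → K}

theorem aeval_perturbation {m : ℕ} (x : Fin m → K) (z : N) :
    aeval z (perturbation f₀ x) = (perturbation f₀ (algebraMap K N ∘ x)).eval z := by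
  rw [← eval_map_algebraMap, map_perturbation]

theorem perturbation_three (x : Fin 3 → K) :
    perturbation f₀ x = f₀.map (algebraMap F K) + C (x 2) * X ^ 2 + (C (x 1) * X + C (x 0)) := by
  simp only [perturbation, Fin.sum_univ_three, Fin.val_zero, Fin.val_one, Fin.val_two, pow_zero,
    pow_one, mul_one]
  ring

theorem transcendental_adjoinSimple_gen {p : N} (hp : Transcendental F p) :
    Transcendental F (AdjoinSimple.gen F p) :=
  (transcendental_algebraMap_iff (algebraMap F⟮p⟯ N).injective).mp hp

theorem map_map_adjoin_simple_tower (f : F[X]) (p q : N) :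
    (f.map (algebraMap F F⟮p⟯⟮q⟯)).map (algebraMap F⟮p⟯⟮q⟯ N) = f.map (algebraMap F N) := by
  rw [Polynomial.map_map]
  rfl

theorem exists_algEquiv_swap [IsGalois K N] (h2 : (2 : F) ≠ 0) (hf₀ : 3 ≤ f₀.natDegree)
    (hx : IsRationalFunctionField F x) {α β : N} (hαβ : α ≠ β)
    (hα : aeval α (perturbation f₀ x) = 0) (hβ : aeval β (perturbation f₀ x) = 0) :
    ∃ τ : N ≃ₐ[K] N, τ α = β ∧ τ β = α ∧
      ∀ γ, aeval γ (perturbation f₀ x) = 0 → γ ≠ α → γ ≠ β → τ γ = γ := by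
  have h2N : (2 : N) ≠ 0 := two_ne_zero_of_algebra h2
  obtain ⟨s, v, rfl, rfl⟩ : ∃ s v, α = s + v ∧ β = s - v :=
    ⟨(α + β) / 2, (α - β) / 2, by field_simp; ring, by field_simp; ring⟩
  have hv : v ≠ 0 := fun h ↦ hαβ (by rw [h, add_zero, sub_zero])
  simp only [aeval_perturbation] at hα hβ ⊢
  set a := algebraMap K N ∘ x
  have hp : perturbation f₀ a = (f₀.map (algebraMap F F⟮s⟯⟮a 2⟯) +
      C (AdjoinSimple.gen F⟮s⟯ (a 2)) * X ^ 2).map (algebraMap F⟮s⟯⟮a 2⟯ N) +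
        (C (a 1) * X + C (a 0)) := by
    rw [perturbation_three, Polynomial.map_add, map_map_adjoin_simple_tower,
      Polynomial.map_mul, map_C, Polynomial.map_pow, map_X]
    rfl
  have hcoeff := (map_add_eq_quadratic_mul_cofactor
    (s := algebraMap F⟮s⟯ F⟮s⟯⟮a 2⟯ (AdjoinSimple.gen F s)) h2N hv (hp ▸ hα) (hp ▸ hβ)).2
  have hmem : ∀ i, a i ∈ F⟮s⟯⟮a 2⟯⟮v ^ 2⟯ := by
    intro i
    fin_cases i
    · simpa using hcoeff 0
    · simpa using hcoeff 1
    · exact IntermediateField.algebraMap_mem _ (AdjoinSimple.gen F⟮s⟯ (a 2))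
  obtain ⟨hs, hc, hv'⟩ := hx.transcendental_tower hmem
  obtain ⟨τ, hτv, hτE, hτ⟩ := exists_algEquiv_swap_of_transcendental h2 hf₀
    (transcendental_adjoinSimple_gen hs) (transcendental_adjoinSimple_gen hc) hv'
    (hx.algebraMap_mem hmem) hp hα hβ
  have hτs : τ s = s := hτE (algebraMap F⟮s⟯ _ (AdjoinSimple.gen F s))
  exact ⟨τ, by rw [map_add, hτs, hτv, sub_eq_add_neg],
    by rw [map_sub, hτs, hτv, sub_neg_eq_add], hτ⟩

theorem exists_algEquiv_flip [IsGalois K N] (h2 : (2 : F) ≠ 0) (hf₀ : 3 ≤ f₀.natDegree)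
    (hx : IsRationalFunctionField F x) {β : N} (hβ : aeval (-β ^ 2) (perturbation f₀ x) = 0) :
    ∃ τ : N ≃ₐ[K] N, τ β = -β ∧
      ∀ γ, aeval (-γ ^ 2) (perturbation f₀ x) = 0 → γ ^ 2 ≠ β ^ 2 → τ γ = γ := by
  simp only [aeval_perturbation] at hβ ⊢
  set a := algebraMap K N ∘ x
  have hp : perturbation f₀ a = (f₀.map (algebraMap F F⟮a 2⟯⟮a 1⟯) +
      C (algebraMap F⟮a 2⟯ F⟮a 2⟯⟮a 1⟯ (AdjoinSimple.gen F (a 2))) * X ^ 2 +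
        C (AdjoinSimple.gen F⟮a 2⟯ (a 1)) * X).map (algebraMap F⟮a 2⟯⟮a 1⟯ N) + C (a 0) := by
    rw [perturbation_three, Polynomial.map_add, Polynomial.map_add, map_map_adjoin_simple_tower,
      Polynomial.map_mul, map_C, Polynomial.map_pow, map_X,
      Polynomial.map_mul, map_C, map_X, ← add_assoc]
    rfl
  have hmem : ∀ i, a i ∈ F⟮a 2⟯⟮a 1⟯⟮β ^ 2⟯ := by
    intro i
    fin_cases i
    · exact (map_add_eq_linear_mul_cofactor (hp ▸ hβ)).2
    · exact IntermediateField.algebraMap_mem _ (AdjoinSimple.gen F⟮a 2⟯ (a 1))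
    · exact IntermediateField.algebraMap_mem _
        (algebraMap F⟮a 2⟯ F⟮a 2⟯⟮a 1⟯ (AdjoinSimple.gen F (a 2)))
  obtain ⟨hc, hb, hv⟩ := hx.transcendental_tower hmem
  exact exists_algEquiv_flip_of_transcendental h2 hf₀ (transcendental_adjoinSimple_gen hc)
    (transcendental_adjoinSimple_gen hb) hv (hx.algebraMap_mem hmem) hp hβ

end RationalFunctionField

/-! ### Permutations of the roots and sign changes -/

section Swaps

variable {K L : Type*} [Field K] [Field L] [Algebra K L] {f : K[X]}

theorem toPermHom_rootSet_surjective
    (h : ∀ α β : L, α ≠ β → aeval α f = 0 → aeval β f = 0 →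
      ∃ τ : L ≃ₐ[K] L, τ α = β ∧ τ β = α ∧ ∀ γ, aeval γ f = 0 → γ ≠ α → γ ≠ β → τ γ = γ) :
    Function.Surjective (MulAction.toPermHom (L ≃ₐ[K] L) (f.rootSet L)) := by
  classical
  rw [← MonoidHom.range_eq_top, eq_top_iff, ← Equiv.Perm.closure_isSwap, Subgroup.closure_le]
  rintro _ ⟨α, β, hne, rfl⟩
  obtain ⟨τ, hα, hβ, hτ⟩ := h α β (Subtype.coe_ne_coe.mpr hne) (mem_rootSet.mp α.2).2
    (mem_rootSet.mp β.2).2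
  refine ⟨τ, Equiv.ext fun γ ↦ Subtype.ext ?_⟩
  rw [MulAction.toPermHom_apply, MulAction.toPerm_apply, rootSet.coe_smul]
  rcases eq_or_ne γ α with rfl | hγα
  · rw [Equiv.swap_apply_left]
    exact hα
  rcases eq_or_ne γ β with rfl | hγβ
  · rw [Equiv.swap_apply_right]
    exact hβ
  rw [Equiv.swap_apply_of_ne_of_ne hγα hγβ]
  exact hτ γ (mem_rootSet.mp γ.2).2 (Subtype.coe_ne_coe.mpr hγα) (Subtype.coe_ne_coe.mpr hγβ)

theorem toPermHom_rootSet_injective [IsSplittingField K L f] :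
    Function.Injective (MulAction.toPermHom (L ≃ₐ[K] L) (f.rootSet L)) := by
  intro σ τ h
  have hext : (σ : L →ₐ[K] L) = τ :=
    AlgHom.ext_of_adjoin_eq_top (IsSplittingField.adjoin_rootSet L f) fun γ hγ ↦
      congrArg Subtype.val (Equiv.congr_fun h ⟨γ, hγ⟩)
  exact AlgEquiv.ext (AlgHom.congr_fun hext)

end Swaps

section SignChanges

variable {K M ι : Type*} [Field K] [Field M] [Algebra K M] {β : ι → M}

theorem exists_algEquiv_neg_on_finset [DecidableEq ι]
    (hflip : ∀ i, ∃ τ : M ≃ₐ[K] M, τ (β i) = -β i ∧ ∀ j ≠ i, τ (β j) = β j) (S : Finset ι) :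
    ∃ τ : M ≃ₐ[K] M, ∀ i, τ (β i) = if i ∈ S then -β i else β i := by
  induction S using Finset.induction_on with
  | empty => exact ⟨1, fun i ↦ by simp⟩
  | insert a S ha ih =>
    obtain ⟨σ, hσ⟩ := ih
    obtain ⟨τ, hτa, hτ⟩ := hflip a
    refine ⟨τ * σ, fun i ↦ ?_⟩
    rw [AlgEquiv.mul_apply, hσ]
    rcases eq_or_ne i a with rfl | hia
    · simp [ha, hτa]
    · by_cases hiS : i ∈ S <;> simp [hia, hiS, hτ i hia]

theorem card_eq_two_pow_of_sign_changes [Fintype ι] (hgen : Algebra.adjoin K (Set.range β) = ⊤)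
    (hβ : ∀ i, -β i ≠ β i)
    (hflip : ∀ i, ∃ τ : M ≃ₐ[K] M, τ (β i) = -β i ∧ ∀ j ≠ i, τ (β j) = β j)
    {H : Subgroup (M ≃ₐ[K] M)} (hH : ∀ σ, σ ∈ H ↔ ∀ i, σ (β i) ^ 2 = β i ^ 2) :
    Nat.card H = 2 ^ Fintype.card ι := by
  classical
  let negated (σ : H) : Finset ι := {i | σ.1 (β i) = -β i}
  have happly (σ : H) (i : ι) : σ.1 (β i) = if i ∈ negated σ then -β i else β i := by
    rcases sq_eq_sq_iff_eq_or_eq_neg.mp ((hH σ).mp σ.2 i) with h | h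
    · simp [negated, h, (hβ i).symm]
    · simp [negated, h]
  have hinj : Function.Injective negated := by
    intro σ τ h
    have hext : (σ.1 : M →ₐ[K] M) = τ.1 := AlgHom.ext_of_adjoin_eq_top hgen <| by
      rintro _ ⟨i, rfl⟩
      exact (happly σ i).trans (h ▸ (happly τ i).symm)
    exact Subtype.ext (AlgEquiv.ext (AlgHom.congr_fun hext))
  have hsurj : Function.Surjective negated := by
    intro S
    obtain ⟨τ, hτ⟩ := exists_algEquiv_neg_on_finset hflip S
    refine ⟨⟨τ, (hH τ).mpr fun i ↦ ?_⟩, ?_⟩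
    · rw [hτ]
      split_ifs
      exacts [neg_sq _, rfl]
    · ext i
      by_cases hi : i ∈ S <;> simp [negated, hτ, hi, (hβ i).symm]
  rw [Nat.card_eq_of_bijective negated ⟨hinj, hsurj⟩, Nat.card_eq_fintype_card, Fintype.card_finset]

end SignChanges

section CompNegSq

variable {K M : Type*} [Field K] [Field M] [Algebra K M] {f : K[X]}

theorem aeval_comp_neg_sq (f : K[X]) (z : M) :
    aeval z (f.comp (-X ^ 2)) = aeval (-z ^ 2) f := by
  simp [aeval_comp]

theorem separable_comp_neg_sq (h2 : (2 : K) ≠ 0) (h0 : f.coeff 0 ≠ 0) (hf : f.Separable) :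
    (f.comp (-X ^ 2)).Separable := by
  have hX : IsCoprime (f.comp (-X ^ 2)) X := by
    refine (irreducible_X.coprime_iff_not_dvd.mpr fun h ↦ h0 ?_).symm
    rw [X_dvd_iff, coeff_zero_eq_eval_zero, eval_comp] at h
    simpa [coeff_zero_eq_eval_zero] using h
  have hcomp : IsCoprime (f.comp (-X ^ 2)) (f.derivative.comp (-X ^ 2)) :=
    IsCoprime.map hf (compRingHom (-X ^ 2))
  rw [Polynomial.Separable, derivative_comp, derivative_neg, derivative_X_sq]
  refine IsCoprime.mul_right ?_ hcomp
  rw [IsCoprime.neg_right_iff, isCoprime_mul_unit_left_right (isUnit_C.mpr h2.isUnit)]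
  exact hX

theorem splits_of_comp_neg_sq [IsSplittingField K M (f.comp (-X ^ 2))] :
    (f.map (algebraMap K M)).Splits := by
  let e := (IsSplittingField.algEquiv M (f.comp (-X ^ 2))).symm
  have h := (Gal.splits_in_splittingField_of_comp f (-X ^ 2) (by simp)).map e.toRingHom
  rw [Polynomial.map_map] at h
  exact (RingHom.ext e.commutes : e.toRingHom.comp (algebraMap K _) = algebraMap K M) ▸ h

theorem exists_neg_sq_eq_of_aeval_eq_zero [IsSplittingField K M (f.comp (-X ^ 2))] (hf : f ≠ 0)
    {α : M} (hα : aeval α f = 0) : ∃ β : M, -β ^ 2 = α := by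
  have hdvd : -X ^ 2 - C α ∣ (f.comp (-X ^ 2)).map (algebraMap K M) := by
    have := map_dvd (compRingHom (-X ^ 2 : M[X]))
      (dvd_iff_isRoot.mpr (by rwa [IsRoot, eval_map_algebraMap] :
        (f.map (algebraMap K M)).IsRoot α))
    simpa [Polynomial.map_comp] using this
  have hsplits := (IsSplittingField.splits M (f.comp (-X ^ 2))).of_dvd
    (Polynomial.map_ne_zero (comp_neg_X_sq_ne_zero hf)) hdvd
  have hdeg : (-X ^ 2 - C α : M[X]).degree ≠ 0 := by
    rw [← neg_add', degree_neg, degree_X_pow_add_C two_pos]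
    norm_num
  obtain ⟨β, hβ⟩ := hsplits.exists_eval_eq_zero hdeg
  refine ⟨β, sub_eq_zero.mp ?_⟩
  simpa using hβ

theorem adjoin_range_sqrt_eq_top [IsSplittingField K M (f.comp (-X ^ 2))]
    {β : f.rootSet M → M} (hβ : ∀ α, -β α ^ 2 = α) : Algebra.adjoin K (Set.range β) = ⊤ := by
  rw [eq_top_iff, ← IsSplittingField.adjoin_rootSet M (f.comp (-X ^ 2)), Algebra.adjoin_le_iff]
  intro z hz
  have hz' := mem_rootSet.mp hz
  rw [aeval_comp_neg_sq] at hz'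
  have hf : f ≠ 0 := fun h ↦ hz'.1 (by rw [h, zero_comp])
  let α : f.rootSet M := ⟨-z ^ 2, mem_rootSet.mpr ⟨hf, hz'.2⟩⟩
  have hmem : β α ∈ Algebra.adjoin K (Set.range β) := Algebra.subset_adjoin ⟨α, rfl⟩
  rcases sq_eq_sq_iff_eq_or_eq_neg.mp (neg_injective (hβ α)) with h | h
  · exact h ▸ hmem
  · exact (neg_eq_iff_eq_neg.mpr h) ▸ neg_mem hmem

theorem card_algEquiv_comp_neg_sq [IsSplittingField K M (f.comp (-X ^ 2))] (h2 : (2 : K) ≠ 0)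
    (h0 : f.coeff 0 ≠ 0) (hf : f.Separable)
    (hswap : ∀ α β : M, α ≠ β → aeval α f = 0 → aeval β f = 0 →
      ∃ τ : M ≃ₐ[K] M, τ α = β ∧ τ β = α ∧ ∀ γ, aeval γ f = 0 → γ ≠ α → γ ≠ β → τ γ = γ)
    (hflip : ∀ β : M, aeval (-β ^ 2) f = 0 → ∃ τ : M ≃ₐ[K] M, τ β = -β ∧
      ∀ γ, aeval (-γ ^ 2) f = 0 → γ ^ 2 ≠ β ^ 2 → τ γ = γ) :
    Nat.card (M ≃ₐ[K] M) = 2 ^ f.natDegree * f.natDegree.factorial := by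
  have hroot (α : f.rootSet M) : aeval α.1 f = 0 := (mem_rootSet.mp α.2).2
  choose β hβ using fun α : f.rootSet M ↦ exists_neg_sq_eq_of_aeval_eq_zero hf.ne_zero (hroot α)
  have hcard : Fintype.card (f.rootSet M) = f.natDegree :=
    card_rootSet_eq_natDegree hf splits_of_comp_neg_sq
  have hβ₀ (α) : -β α ≠ β α := by
    intro h
    have h2M : (2 : M) ≠ 0 := two_ne_zero_of_algebra h2
    have htwice : 2 * β α = 0 := by linear_combination -h
    have hzero := hroot α
    rw [← hβ, (mul_eq_zero.mp htwice).resolve_left h2M, zero_pow two_ne_zero, neg_zero,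
      ← coeff_zero_eq_aeval_zero', map_eq_zero] at hzero
    exact h0 hzero
  have hβflip (α) : ∃ τ : M ≃ₐ[K] M, τ (β α) = -β α ∧ ∀ γ ≠ α, τ (β γ) = β γ := by
    obtain ⟨τ, hτα, hτ⟩ := hflip (β α) (by rw [hβ, hroot])
    refine ⟨τ, hτα, fun γ hγ ↦ hτ (β γ) (by rw [hβ, hroot]) fun h ↦ hγ (Subtype.ext ?_)⟩
    rw [← hβ, ← hβ, h]
  have hker (σ : M ≃ₐ[K] M) : σ ∈ (MulAction.toPermHom (M ≃ₐ[K] M) (f.rootSet M)).ker ↔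
      ∀ α, σ (β α) ^ 2 = β α ^ 2 := by
    rw [MonoidHom.mem_ker, Equiv.ext_iff]
    refine forall_congr' fun α ↦ ?_
    rw [MulAction.toPermHom_apply, MulAction.toPerm_apply, Equiv.Perm.one_apply, Subtype.ext_iff,
      rootSet.coe_smul, ← hβ, AlgEquiv.smul_def, map_neg, map_pow, neg_inj]
  rw [← Subgroup.card_mul_index (MulAction.toPermHom (M ≃ₐ[K] M) (f.rootSet M)).ker,
    Subgroup.index_ker, MonoidHom.range_eq_top.mpr (toPermHom_rootSet_surjective hswap),
    card_eq_two_pow_of_sign_changes (adjoin_range_sqrt_eq_top hβ) hβ₀ hβflip hker,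
    Subgroup.card_top, Nat.card_perm, Nat.card_eq_fintype_card, hcard]

end CompNegSq

section Perturbation

variable {F K : Type*} [Field F] [Field K] [Algebra F K] {f₀ : F[X]}

theorem natDegree_perturbation {m : ℕ} (hm : m ≤ f₀.natDegree) (x : Fin m → K) :
    (perturbation f₀ x).natDegree = f₀.natDegree := by
  rcases eq_or_ne f₀ 0 with rfl | hf₀
  · obtain rfl := Nat.le_zero.mp hm
    simp [perturbation]
  rw [perturbation, natDegree_add_eq_left_of_degree_lt, natDegree_map]
  rw [degree_map, degree_eq_natDegree hf₀]
  exact (degree_sum_fin_lt x).trans_le (mod_cast hm)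

theorem coeff_zero_perturbation_ne_zero {x : Fin 3 → K} (hx : AlgebraicIndependent F x) :
    (perturbation f₀ x).coeff 0 ≠ 0 := by
  intro h
  have h₀ : algebraMap F K (f₀.coeff 0) + x 0 = 0 := by simpa [perturbation_three] using h
  exact hx.transcendental 0 (eq_neg_of_add_eq_zero_right h₀ ▸ (isAlgebraic_algebraMap _).neg)

theorem separable_perturbation {x : Fin 3 → K} (hx : AlgebraicIndependent F x) :
    (perturbation f₀ x).Separable := by
  have hx' : AlgebraicIndependent F ![x 2, x 1, x 0] := by
    convert hx.comp ![2, 1, 0] (by decide) using 1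
    ext i
    fin_cases i <;> rfl
  obtain ⟨-, -, ha⟩ := transcendental_adjoin_simple_tower hx'
  let k := F⟮x 2⟯⟮x 1⟯
  let c : F⟮x 2⟯ := AdjoinSimple.gen F (x 2)
  let b : k := AdjoinSimple.gen F⟮x 2⟯ (x 1)
  have hp : perturbation f₀ x = (f₀.map (algebraMap F k) + C (algebraMap F⟮x 2⟯ k c) * X ^ 2 +
      C b * X).map (algebraMap k K) + C (x 0) := by
    rw [perturbation_three, Polynomial.map_add, Polynomial.map_add, map_map_adjoin_simple_tower,
      Polynomial.map_mul, map_C, Polynomial.map_pow, map_X, Polynomial.map_mul, map_C, map_X,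
      ← add_assoc]
    rfl
  rw [hp]
  refine separable_map_add_C_of_transcendental ha fun h ↦ ?_
  have h₁ : algebraMap F k (f₀.coeff 1) + b = 0 := by
    simpa [coeff_derivative] using congrArg (coeff · 0) h
  have h₂ : algebraMap F K (f₀.coeff 1) + x 1 = 0 := congrArg (algebraMap k K) h₁
  exact hx.transcendental 1 (eq_neg_of_add_eq_zero_right h₂ ▸ (isAlgebraic_algebraMap _).neg)

end Perturbation

section ThreeVariables

variable {F K : Type*} [Field F] [Field K] [Algebra F K] {f₀ : F[X]} {x : Fin 3 → K}

theorem nonempty_mulEquiv_perm_of_isRationalFunctionField (h2 : (2 : F) ≠ 0)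
    (hf₀ : 3 ≤ f₀.natDegree) (hx : IsRationalFunctionField F x) {L : Type*} [Field L] [Algebra K L]
    [IsSplittingField K L (perturbation f₀ x)] :
    Nonempty ((L ≃ₐ[K] L) ≃* Equiv.Perm (Fin f₀.natDegree)) := by
  have hsep : (perturbation f₀ x).Separable := separable_perturbation hx.1
  have : IsGalois K L := .of_separable_splitting_field hsep
  algebraize [(algebraMap K L).comp (algebraMap F K)]
  have hcard := card_rootSet_eq_natDegree hsep (IsSplittingField.splits L (perturbation f₀ x))
  rw [natDegree_perturbation hf₀] at hcard
  have hbij := And.intro (toPermHom_rootSet_injective (L := L) (f := perturbation f₀ x))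
    (toPermHom_rootSet_surjective fun α β ↦ exists_algEquiv_swap (N := L) h2 hf₀ hx)
  exact ⟨(MulEquiv.ofBijective _ hbij).trans
    (Fintype.equivFinOfCardEq hcard).permCongrHom⟩

theorem card_algEquiv_comp_of_isRationalFunctionField (h2 : (2 : F) ≠ 0)
    (hf₀ : 3 ≤ f₀.natDegree) (hx : IsRationalFunctionField F x) {M : Type*} [Field M] [Algebra K M]
    [IsSplittingField K M ((perturbation f₀ x).comp (-X ^ 2))] :
    Nat.card (M ≃ₐ[K] M) = 2 ^ f₀.natDegree * f₀.natDegree.factorial := by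
  have hsep : (perturbation f₀ x).Separable := separable_perturbation hx.1
  have h0 := coeff_zero_perturbation_ne_zero (f₀ := f₀) hx.1
  have h2K : (2 : K) ≠ 0 := two_ne_zero_of_algebra h2
  have : IsGalois K M := .of_separable_splitting_field (separable_comp_neg_sq h2K h0 hsep)
  algebraize [(algebraMap K M).comp (algebraMap F K)]
  rw [← natDegree_perturbation hf₀ x]
  exact card_algEquiv_comp_neg_sq h2K h0 hsep (fun α β ↦ exists_algEquiv_swap h2 hf₀ hx)
    fun β ↦ exists_algEquiv_flip h2 hf₀ hx

end ThreeVariables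

section Reduction

variable {F K : Type*} [Field F] [Field K] [Algebra F K] {m : ℕ} {x : Fin (m + 3) → K}

-- Only the three lowest variables matter: the others may be moved into the base field and absorbed
-- in `f₀`.
theorem IsRationalFunctionField.castLE_of_adjoin (hx : IsRationalFunctionField F x) :
    IsRationalFunctionField (IntermediateField.adjoin F (x '' {i | 3 ≤ (i : ℕ)}))
      (x ∘ Fin.castLE (Nat.le_add_left 3 m)) where
  algebraicIndependent :=
    algebraicIndependent_comp_adjoin_image hx.1 (Fin.castLE_injective _) fun j ↦ j.2.not_ge
  adjoin_eq_top := by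
    rw [← restrictScalars_inj F, adjoin_adjoin_left, restrictScalars_top, Set.range_comp,
      ← Set.image_union, eq_top_iff, ← hx.2]
    refine adjoin.mono _ _ _ ?_
    rw [← Set.image_univ]
    refine Set.image_mono fun i _ ↦ ?_
    by_cases hi : 3 ≤ (i : ℕ)
    · exact .inl hi
    · exact .inr ⟨⟨i, by omega⟩, rfl⟩

theorem exists_perturbation_eq_perturbation_castLE (f₀ : F[X]) (x : Fin (m + 3) → K)
    (hdeg : m + 3 ≤ f₀.natDegree) :
    ∃ f₁ : (IntermediateField.adjoin F (x '' {i | 3 ≤ (i : ℕ)}))[X],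
      f₁.natDegree = f₀.natDegree ∧
        perturbation f₀ x = perturbation f₁ (x ∘ Fin.castLE (Nat.le_add_left 3 m)) := by
  let y (i : Fin (m + 3)) : IntermediateField.adjoin F (x '' {i | 3 ≤ (i : ℕ)}) :=
    if h : 3 ≤ (i : ℕ) then ⟨x i, subset_adjoin F _ ⟨i, h, rfl⟩⟩ else 0
  refine ⟨perturbation f₀ y, natDegree_perturbation hdeg y, ?_⟩
  have hlow (i : Fin 3) : y (i.castLE (Nat.le_add_left 3 m)) = 0 := dif_neg i.2.not_ge
  have hhigh (i : Fin m) : algebraMap _ K (y (i.natAdd 3 |>.cast (add_comm 3 m))) =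
      x (i.natAdd 3 |>.cast (add_comm 3 m)) := by
    simp only [y, Fin.val_cast, Fin.val_natAdd, Nat.le_add_right, dite_true]
    rfl
  have hsplit (z : Fin (m + 3) → K[X]) : ∑ i, z i =
      ∑ i : Fin 3, z (i.castLE (Nat.le_add_left 3 m)) +
        ∑ i : Fin m, z (i.natAdd 3 |>.cast (add_comm 3 m)) := by
    rw [← Equiv.sum_comp (finCongr (add_comm 3 m)), Fin.sum_univ_add]
    rfl
  simp only [perturbation, Polynomial.map_add, Polynomial.map_sum, Polynomial.map_mul,
    Polynomial.map_pow, map_C, map_X, Polynomial.map_map, ← IsScalarTower.algebraMap_eq, hsplit,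
    hlow, hhigh, map_zero, zero_mul, Finset.sum_const_zero, zero_add, Function.comp_apply,
    Fin.val_castLE]
  ring

theorem isRationalFunctionField_of_isFractionRing {ι : Type*} [Algebra (MvPolynomial ι F) K]
    [IsFractionRing (MvPolynomial ι F) K] [IsScalarTower F (MvPolynomial ι F) K] :
    IsRationalFunctionField F fun i ↦ algebraMap (MvPolynomial ι F) K (.X i) where
  algebraicIndependent := (MvPolynomial.algebraicIndependent_X ι F).map'
    (f := IsScalarTower.toAlgHom F (MvPolynomial ι F) K)
    (IsFractionRing.injective (MvPolynomial ι F) K)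
  adjoin_eq_top := by
    rw [eq_top_iff]
    rintro z -
    set W := IntermediateField.adjoin F (Set.range fun i ↦ algebraMap (MvPolynomial ι F) K (.X i))
    have hmem (p : MvPolynomial ι F) : algebraMap _ K p ∈ W := by
      induction p using MvPolynomial.induction_on with
      | C r => exact IsScalarTower.algebraMap_apply F (MvPolynomial ι F) K r ▸ W.algebraMap_mem r
      | add p q hp hq => exact map_add (algebraMap _ K) p q ▸ add_mem hp hq
      | mul_X p i hp =>
        exact map_mul (algebraMap _ K) p _ ▸ mul_mem hp (subset_adjoin F _ ⟨i, rfl⟩)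
    obtain ⟨p, q, -, rfl⟩ := IsFractionRing.div_surjective (A := MvPolynomial ι F) z
    exact div_mem (hmem p) (hmem q)

end Reduction

theorem generic_galois_group_general {F K : Type*} [Field F] [Field K] [Algebra F K] {m : ℕ}
    (hchar : ringChar F ≠ 2) (hm : 2 ≤ m) {f₀ : F[X]} (hdeg : m < f₀.natDegree)
    {x : Fin (m + 1) → K} (hx : IsRationalFunctionField F x) :
    (∀ (L : Type*) [Field L] [Algebra K L], IsSplittingField K L (perturbation f₀ x) →
      Nonempty ((L ≃ₐ[K] L) ≃* Equiv.Perm (Fin f₀.natDegree))) ∧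
    (∀ (M : Type*) [Field M] [Algebra K M],
      IsSplittingField K M ((perturbation f₀ x).comp (-X ^ 2)) →
      Nat.card (M ≃ₐ[K] M) = 2 ^ f₀.natDegree * f₀.natDegree.factorial) := by
  obtain ⟨l, rfl⟩ := Nat.exists_eq_add_of_le' hm
  obtain ⟨f₁, hf₁, heq⟩ := exists_perturbation_eq_perturbation_castLE f₀ x hdeg
  have h2 : (2 : IntermediateField.adjoin F (x '' {i | 3 ≤ (i : ℕ)})) ≠ 0 :=
    two_ne_zero_of_algebra (Ring.two_ne_zero hchar)
  have hf₁' : 3 ≤ f₁.natDegree := by omega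
  rw [heq, ← hf₁]
  exact ⟨fun L _ _ _ ↦
    nonempty_mulEquiv_perm_of_isRationalFunctionField h2 hf₁' hx.castLE_of_adjoin,
    fun M _ _ _ ↦ card_algEquiv_comp_of_isRationalFunctionField h2 hf₁' hx.castLE_of_adjoin⟩

/-- **The generic Galois group.** Let `char F ≠ 2`, `n > m ≥ 2`, `f₀ ∈ F[T]` monic of
degree `n`, `K = F(A₀,…,A_m)` and `f = f₀ + ∑ Aᵢ Tⁱ ∈ K[T]`. Then `Gal(f|K) ≅ S_n` and
the Galois group of `f(-T²)` over `K` has order `2ⁿ·n!`. -/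
theorem generic_galois_group
    (F : Type) [Field F] (hchar : ringChar F ≠ 2)
    (n m : ℕ) (hm : 2 ≤ m) (hmn : m < n)
    (f₀ : Polynomial F) (hmon : f₀.Monic) (hdeg : f₀.natDegree = n) :
    ∀ (K : Type) [Field K] [Algebra (MvPolynomial (Fin (m + 1)) F) K]
      [IsFractionRing (MvPolynomial (Fin (m + 1)) F) K],
    ∀ f : Polynomial K,
      f = (f₀.map ((algebraMap (MvPolynomial (Fin (m + 1)) F) K).comp
            (MvPolynomial.C : F →+* MvPolynomial (Fin (m + 1)) F))) +
          ∑ i : Fin (m + 1),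
            Polynomial.C (algebraMap (MvPolynomial (Fin (m + 1)) F) K
              (MvPolynomial.X i)) * Polynomial.X ^ (i : ℕ) →
      (∀ (L : Type) [Field L] [Algebra K L], Polynomial.IsSplittingField K L f →
        Nonempty ((L ≃ₐ[K] L) ≃* Equiv.Perm (Fin n))) ∧
      (∀ (M : Type) [Field M] [Algebra K M],
        Polynomial.IsSplittingField K M (f.comp (-(Polynomial.X ^ 2))) →
        Nat.card (M ≃ₐ[K] M) = 2 ^ n * Nat.factorial n) := by
  intro K _ _ _ f hf
  algebraize [(algebraMap (MvPolynomial (Fin (m + 1)) F) K).comp MvPolynomial.C]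
  subst hf hdeg
  exact generic_galois_group_general hchar hm hmn isRationalFunctionField_of_isFractionRing
end

section
/- Let F be a field of characteristic different from 2, let n > m ≥ 2 be integers, and let f₀ ∈ F[T] be a monic polynomial of degree n. Let K = F(A₀, …, A_m) be the field of rational functions in m + 1 independent variables A₀, …, A_m over F, set f(T) = f₀(T) + ∑_{i=0}^m Aᵢ Tⁱ ∈ K[T], and let L be a splitting field of f over K. Then for any root α of f in L, writing y = −α, the m + 1 elements A₀, A₂, A₃, …, A_m, y of L are algebraically independent over F. -/
/-!
The root equation is affine in each `Aⱼ`, with coefficient `αʲ`, and `α ≠ 0` because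
`f(0) = f₀(0) + A₀` is transcendental over `F`. So `Aⱼ` is a rational function of `α` and the other
`Aᵢ`, and by the exchange property of algebraic independence `α` may replace `Aⱼ`.
-/

open Algebra Polynomial

section Exchange

variable {ι R A : Type*} [CommRing R] [CommRing A] [NoZeroDivisors A] [Algebra R A]
  {x : ι → A} {a : A} {j : ι}

theorem algebraicIndependent_option_of_isAlgebraic_adjoin_insert (hx : AlgebraicIndependent R x)
    (hj : IsAlgebraic (adjoin R (insert a (x '' {j}ᶜ))) (x j)) :
    AlgebraicIndependent R (fun o : Option {i // i ≠ j} => o.elim a (fun i => x i)) := by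
  refine ((hx.comp _ Subtype.val_injective).option_iff_transcendental a).mpr fun ha => ?_
  have ha' : IsAlgebraic (adjoin R (x '' {j}ᶜ)) a := by
    rw [Set.image_eq_range]
    exact ha
  refine hx.transcendental_adjoin (s := {j}ᶜ) (by simp) (hj.adjoin_of_forall_isAlgebraic ?_)
  rintro b ⟨rfl | hb, hb'⟩
  exacts [ha', absurd hb hb']

theorem algebraicIndependent_option_of_sum_mul_mem_adjoin [Fintype ι]
    (hx : AlgebraicIndependent R x) {c : ι → A} (hc : ∀ i, c i ∈ adjoin R {a}) (hcj : c j ≠ 0)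
    (hsum : ∑ i, c i * x i ∈ adjoin R {a}) :
    AlgebraicIndependent R (fun o : Option {i // i ≠ j} => o.elim a (fun i => x i)) := by
  classical
  have : Nontrivial A := ⟨c j, 0, hcj⟩
  refine algebraicIndependent_option_of_isAlgebraic_adjoin_insert hx ?_
  set S := adjoin R (insert a (x '' {j}ᶜ))
  have haS : adjoin R {a} ≤ S := adjoin_mono (by simp)
  have hxS : ∀ i ≠ j, x i ∈ S := fun i hi =>
    subset_adjoin (Set.mem_insert_of_mem a (Set.mem_image_of_mem x hi))
  have hjS : c j * x j ∈ S := by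
    rw [← Finset.add_sum_erase _ _ (Finset.mem_univ j)] at hsum
    refine (add_mem_cancel_right (sum_mem fun i hi => ?_)).mp (haS hsum)
    exact mul_mem (haS (hc i)) (hxS i (Finset.ne_of_mem_erase hi))
  exact .of_mul (mem_nonZeroDivisors_of_ne_zero hcj)
    (isAlgebraic_algebraMap (⟨c j, haS (hc j)⟩ : S)) (isAlgebraic_algebraMap (⟨_, hjS⟩ : S))

end Exchange

theorem algebraicIndependent_algebraMap_X (σ F K : Type*) [CommRing F] [CommRing K]
    [Algebra (MvPolynomial σ F) K] [FaithfulSMul (MvPolynomial σ F) K]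
    [Algebra F K] [IsScalarTower F (MvPolynomial σ F) K] :
    AlgebraicIndependent F
      (fun i : σ => algebraMap (MvPolynomial σ F) K (MvPolynomial.X i)) :=
  (MvPolynomial.algebraicIndependent_X σ F).map' (f := IsScalarTower.toAlgHom F _ K)
    (FaithfulSMul.algebraMap_injective _ K)

section GenericRoot

variable {F L : Type*} [CommRing F] [CommRing L] [Algebra F L] {m : ℕ} {x : Fin (m + 1) → L}
  {f₀ : F[X]} {α : L}

theorem ne_zero_of_aeval_add_sum_eq_zero [Nontrivial F] (hx : AlgebraicIndependent F x)
    (hα : aeval α f₀ + ∑ i, x i * α ^ (i : ℕ) = 0) : α ≠ 0 := by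
  rintro rfl
  have hx₀ : x 0 = algebraMap F L (-f₀.coeff 0) := by
    rw [map_neg, coeff_zero_eq_aeval_zero' f₀, eq_neg_iff_add_eq_zero, add_comm]
    simpa [Fin.sum_univ_succ] using hα
  exact hx.transcendental 0 (hx₀ ▸ isAlgebraic_algebraMap _)

theorem algebraicIndependent_option_neg_of_aeval_add_sum_eq_zero [IsDomain L]
    (hx : AlgebraicIndependent F x)
    (hα : aeval α f₀ + ∑ i, x i * α ^ (i : ℕ) = 0) (j : Fin (m + 1)) :
    AlgebraicIndependent F
      (fun o : Option {i : Fin (m + 1) // i ≠ j} => o.elim (-α) (fun i => x i)) := by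
  have : Nontrivial F := (algebraMap F L).domain_nontrivial
  have hαmem : α ∈ adjoin F {-α} := neg_mem_iff.mp (self_mem_adjoin_singleton F (-α))
  have hf₀mem : aeval α f₀ ∈ adjoin F {-α} :=
    adjoin_le (Set.singleton_subset_iff.mpr hαmem) (aeval_mem_adjoin_singleton F α)
  refine algebraicIndependent_option_of_sum_mul_mem_adjoin hx
    (c := fun i => α ^ (i : ℕ)) (fun i => pow_mem hαmem i)
    (pow_ne_zero _ (ne_zero_of_aeval_add_sum_eq_zero hx hα)) ?_
  simp only [mul_comm (α ^ _), eq_neg_of_add_eq_zero_right hα]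
  exact neg_mem hf₀mem

end GenericRoot

theorem generic_root_algebraically_independent_general
    {F K L : Type*} [CommRing F] [CommRing K] [CommRing L] [IsDomain L]
    [Algebra F K] [Algebra K L] [FaithfulSMul K L] [Algebra F L] [IsScalarTower F K L]
    {m : ℕ} {x : Fin (m + 1) → K} (hx : AlgebraicIndependent F x) (f₀ : F[X]) {f : K[X]}
    (hf : f = f₀.map (algebraMap F K) + ∑ i : Fin (m + 1), C (x i) * X ^ (i : ℕ))
    {α : L} (hα : aeval α f = 0) (j : Fin (m + 1)) :
    AlgebraicIndependent F
      (fun o : Option {i : Fin (m + 1) // i ≠ j} =>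
        o.elim (-α) (fun i => algebraMap K L (x i))) := by
  have hxL : AlgebraicIndependent F (fun i => algebraMap K L (x i)) :=
    hx.map' (f := IsScalarTower.toAlgHom F K L) (FaithfulSMul.algebraMap_injective K L)
  have hroot : aeval α f₀ + ∑ i, algebraMap K L (x i) * α ^ (i : ℕ) = 0 := by
    simpa [hf, aeval_map_algebraMap] using hα
  exact algebraicIndependent_option_neg_of_aeval_add_sum_eq_zero hxL hroot j

/-- With `K = F(A₀,…,A_m)`, `f = f₀ + ∑ Aᵢ Tⁱ` (`char F ≠ 2`, `n > m ≥ 2`, `f₀` monic of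
degree `n`) and `L` a splitting field of `f` over `K`, for any root `α` of `f` in `L` and
`y = -α`, the `m + 1` elements `A₀, A₂, A₃, …, A_m, y` of `L` are algebraically
independent over `F`. -/
theorem generic_root_algebraically_independent
    (F : Type) [Field F] (hchar : ringChar F ≠ 2)
    (n m : ℕ) (hm : 2 ≤ m) (hmn : m < n)
    (f₀ : Polynomial F) (hmon : f₀.Monic) (hdeg : f₀.natDegree = n)
    (K : Type) [Field K] [Algebra (MvPolynomial (Fin (m + 1)) F) K]
    [IsFractionRing (MvPolynomial (Fin (m + 1)) F) K]
    [Algebra F K] [IsScalarTower F (MvPolynomial (Fin (m + 1)) F) K]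
    (f : Polynomial K)
    (hf : f = (f₀.map ((algebraMap (MvPolynomial (Fin (m + 1)) F) K).comp
            (MvPolynomial.C : F →+* MvPolynomial (Fin (m + 1)) F))) +
          ∑ i : Fin (m + 1),
            Polynomial.C (algebraMap (MvPolynomial (Fin (m + 1)) F) K
              (MvPolynomial.X i)) * Polynomial.X ^ (i : ℕ))
    (L : Type) [Field L] [Algebra K L] [Algebra F L] [IsScalarTower F K L]
    (hL : Polynomial.IsSplittingField K L f)
    (α : L) (hα : Polynomial.aeval α f = 0) :
    AlgebraicIndependent F
      (fun o : Option {i : Fin (m + 1) // i ≠ 1} =>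
        o.elim (-α)
          (fun i => algebraMap K L
            (algebraMap (MvPolynomial (Fin (m + 1)) F) K (MvPolynomial.X i.1)))) := by
  rw [← MvPolynomial.algebraMap_eq, ← IsScalarTower.algebraMap_eq] at hf
  exact generic_root_algebraically_independent_general
    (algebraicIndependent_algebraMap_X _ F K) f₀ hf hα 1
end
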